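/- For every integer d ≥ 1, the function k ↦ dim_ℚ H_{2d}(C_k(S^{2d}); ℚ) is not monotonically increasing: there exists k ≥ 1 with dim_ℚ H_{2d}(C_k(S^{2d}); ℚ) > dim_ℚ H_{2d}(C_{k+1}(S^{2d}); ℚ). -/

import Mathlib

open CategoryTheory

/-- The singular chain complex functor with coefficients in a commutative ring `R`:
the levelwise free `R`-module on the singular simplicial set of a space, turned into
a chain complex via the alternating face map complex. -/
noncomputable def singularChainComplexFunctor (R : Type) [CommRing R] :
    TopCat.{0} ⥤ ChainComplex (ModuleCat.{0} R) ℕ :=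
  TopCat.toSSet ⋙ ((SimplicialObject.whiskering _ _).obj (ModuleCat.free R)) ⋙
    AlgebraicTopology.alternatingFaceMapComplex _

/-- The `n`-th singular homology of a topological space, with coefficients in `R`. -/
noncomputable def SingularHomology (R : Type) [CommRing R] (n : ℕ) (X : Type)
    [TopologicalSpace X] : ModuleCat.{0} R :=
  (singularChainComplexFunctor R ⋙ HomologicalComplex.homologyFunctor _ _ n).obj (TopCat.of X)

/-- The setoid on the ordered configuration space (the space of injective tuples
`Fin k → M`) identifying tuples that differ by a permutation of the coordinates. -/
def configSetoid (M : Type) (k : ℕ) : Setoid {f : Fin k → M // Function.Injective f} where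
  r f g := ∃ σ : Equiv.Perm (Fin k), (f : Fin k → M) ∘ σ = g
  iseqv := by
    constructor
    · exact fun f => ⟨Equiv.refl _, rfl⟩
    · rintro f g ⟨σ, h⟩
      exact ⟨σ.symm, by rw [← h]; ext x; simp⟩
    · rintro f g h ⟨σ, hσ⟩ ⟨τ, hτ⟩
      exact ⟨τ.trans σ, by rw [← hτ, ← hσ]; rfl⟩

/-- The unordered configuration space `C_k(M)` of `k` points in `M`: the quotient of
the space of injective tuples `Fin k → M` (with the subspace topology from the product
topology) by the permutation action of the symmetric group, with the quotient topology. -/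
def UnordConfigSpace (M : Type) (k : ℕ) : Type := Quotient (configSetoid M k)

instance (M : Type) [TopologicalSpace M] (k : ℕ) : TopologicalSpace (UnordConfigSpace M k) :=
  instTopologicalSpaceQuotient

/-!
The inequality already holds at `k = 1`. Since `C_1(S) = S`, it suffices that `H_{2d}(S^{2d}) ≠ 0`
and `H_{2d}(C_2(S^{2d})) = 0`.

Pushing the second point of a configuration to the antipode of the first deforms `F_2(S)` onto the
antipodal pairs, a copy of `S` on which swapping the two points is the antipodal map. The sphere
being even-dimensional, the antipodal map is homotopic to a reflection and acts by `-1` on the top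
homology. Hence the projection `F_2(S) → C_2(S)` sends twice any cycle to a boundary, and the
transfer of this double covering shows that the homology of `C_2(S)` in positive degrees is
`4`-torsion, so it vanishes when `2` is invertible.

The two facts about spheres, nonvanishing of the top class and the action of a reflection, both
come from writing the punctured space `(ℝ × E) \ {0}` as the union of two contractible slit spaces
whose intersection retracts onto `E \ {0}`; the decomposition of cycles of a union uses
barycentric subdivision.
-/

open Finset

variable {R : Type*} [CommRing R]

theorem linearMap_congr_of_single {α M : Type*} [AddCommGroup M] [Module R M]
    {f g : (α →₀ R) →ₗ[R] M} (h : ∀ a, f (.single a 1) = g (.single a 1)) (c : α →₀ R) :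
    f c = g c :=
  LinearMap.congr_fun (Finsupp.lhom_ext' fun a ↦ LinearMap.ext_ring (h a)) c

theorem map_mem_of_mem_supported {α M : Type*} [AddCommGroup M] [Module R M]
    {f : (α →₀ R) →ₗ[R] M} {s : Set α} {S : Submodule R M} (h : ∀ a ∈ s, f (.single a 1) ∈ S)
    {c : α →₀ R} (hc : c ∈ Finsupp.supported R R s) : f c ∈ S := by
  suffices Finsupp.supported R R s ≤ S.comap f from this hc
  rw [Finsupp.supported_eq_span_single, Submodule.span_le]
  rintro _ ⟨a, ha, rfl⟩
  exact h a ha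

/-! ### Chains of tuples -/

/-- Formal combinations of `n`-tuples of elements of `K`, to be thought of as ordered simplices with
`n` vertices. The index counts vertices, so that `n = 0` is the augmentation. -/
abbrev TupleChain (R : Type*) [CommRing R] (K : Type*) (n : ℕ) := (Fin n → K) →₀ R

namespace TupleChain

variable {K L : Type*} {n : ℕ}

/-- The alternating sum of the faces of a tuple. -/
noncomputable def boundary : TupleChain R K (n + 1) →ₗ[R] TupleChain R K n :=
  ∑ i : Fin (n + 1), (-1 : R) ^ (i : ℕ) • Finsupp.lmapDomain R R (· ∘ i.succAbove)

/-- The join with the vertex `b`, placed in front. -/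
noncomputable def cone (b : K) : TupleChain R K n →ₗ[R] TupleChain R K (n + 1) :=
  Finsupp.lmapDomain R R fun v ↦ Fin.cons b v

/-- The chain map induced by a map of vertices. -/
noncomputable def map (φ : K → L) : TupleChain R K n →ₗ[R] TupleChain R L n :=
  Finsupp.lmapDomain R R (φ ∘ ·)

theorem boundary_single (v : Fin (n + 1) → K) (r : R) :
    boundary (.single v r) =
      ∑ i : Fin (n + 1), (-1 : R) ^ (i : ℕ) • Finsupp.single (v ∘ i.succAbove) r := by
  simp [boundary, Finsupp.mapDomain_single]

theorem cone_single (b : K) (v : Fin n → K) (r : R) :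
    cone b (.single v r) = .single (Fin.cons b v : Fin (n + 1) → K) r := by
  simp [cone, Finsupp.mapDomain_single]

theorem map_single (φ : K → L) (v : Fin n → K) (r : R) :
    map φ (.single v r) = .single (φ ∘ v) r := by
  simp [map, Finsupp.mapDomain_single]

theorem boundary_cone_zero (b : K) (c : TupleChain R K 0) : boundary (cone b c) = c :=
  linearMap_congr_of_single (f := boundary ∘ₗ cone b) (g := .id) (fun v ↦ by
    simp [cone_single, boundary_single, Subsingleton.elim _ v]) c

theorem cons_comp_succ_succAbove (b : K) (v : Fin (n + 1) → K) (i : Fin (n + 1)) :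
    (Fin.cons b v : Fin (n + 2) → K) ∘ i.succ.succAbove = Fin.cons b (v ∘ i.succAbove) := by
  funext j
  cases j using Fin.cases <;> simp

theorem boundary_cone (b : K) (c : TupleChain R K (n + 1)) :
    boundary (cone b c) = c - cone b (boundary c) := by
  refine linearMap_congr_of_single (f := boundary ∘ₗ cone b)
    (g := .id - cone b ∘ₗ boundary) (fun v ↦ ?_) c
  have face_zero : (Fin.cons b v : Fin (n + 2) → K) ∘ (0 : Fin (n + 2)).succAbove = v := by
    funext j
    simp
  simp only [LinearMap.comp_apply, LinearMap.sub_apply, LinearMap.id_apply, cone_single,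
    boundary_single, map_sum, map_smul]
  rw [Fin.sum_univ_succ, face_zero]
  simp only [cons_comp_succ_succAbove, Fin.val_succ, pow_succ, Fin.val_zero, pow_zero, one_smul,
    mul_neg, mul_one, neg_smul, Finset.sum_neg_distrib, sub_eq_add_neg]

theorem single_eq_cone (v : Fin (n + 1) → K) (r : R) :
    Finsupp.single v r = cone (v 0) (.single (Fin.tail v) r) := by
  rw [cone_single, Fin.cons_self_tail]

theorem boundary_boundary (c : TupleChain R K (n + 2)) : boundary (boundary c) = 0 := by
  induction n with
  | zero =>
    refine linearMap_congr_of_single (f := boundary ∘ₗ boundary) (g := 0) (fun v ↦ ?_) c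
    rw [single_eq_cone, LinearMap.comp_apply, boundary_cone, map_sub, boundary_cone_zero, sub_self,
      LinearMap.zero_apply]
  | succ n ih =>
    refine linearMap_congr_of_single (f := boundary ∘ₗ boundary) (g := 0) (fun v ↦ ?_) c
    rw [single_eq_cone, LinearMap.comp_apply, boundary_cone, map_sub, boundary_cone, ih, map_zero,
      sub_zero, sub_self, LinearMap.zero_apply]

theorem map_cone (φ : K → L) (b : K) (c : TupleChain R K n) :
    map φ (cone b c) = cone (φ b) (map φ c) := by
  refine linearMap_congr_of_single (f := map φ ∘ₗ cone b) (g := cone (φ b) ∘ₗ map φ)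
    (fun v ↦ ?_) c
  simp only [LinearMap.comp_apply, cone_single, map_single]
  congr 1
  funext j
  cases j using Fin.cases <;> simp

theorem map_boundary (φ : K → L) (c : TupleChain R K (n + 1)) :
    map φ (boundary c) = boundary (map φ c) := by
  refine linearMap_congr_of_single (f := map φ ∘ₗ boundary) (g := boundary ∘ₗ map φ)
    (fun v ↦ ?_) c
  simp only [LinearMap.comp_apply, boundary_single, map_single, map_sum, map_smul]
  rfl

end TupleChain

/-! ### Barycentric subdivision of affine chains -/

/-- The standard simplex with `n` vertices, of dimension `n - 1`. -/
abbrev TopSimplex (n : ℕ) := stdSimplex ℝ (Fin n)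

namespace TopSimplex

variable {k m n : ℕ}

theorem ext_apply {s t : TopSimplex n} (h : ∀ j, s j = t j) : s = t :=
  stdSimplex.ext (funext h)

/-- The convex combination of the points `v i` with weights `t i`. -/
noncomputable def convexComb (t : TopSimplex n) (v : Fin n → TopSimplex m) : TopSimplex m :=
  ⟨∑ i, t i • (v i : Fin m → ℝ), (convex_stdSimplex ℝ (Fin m)).sum_mem
    (fun i _ ↦ t.2.1 i) t.2.2 (fun i _ ↦ (v i).2)⟩

theorem convexComb_apply (t : TopSimplex n) (v : Fin n → TopSimplex m) (j : Fin m) :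
    convexComb t v j = ∑ i, t i * v i j := by
  change (∑ i, t i • (v i : Fin m → ℝ)) j = _
  simp [Finset.sum_apply]

theorem vertex_apply (i j : Fin n) :
    (stdSimplex.vertex i : TopSimplex n) j = if j = i then 1 else 0 := by
  simp [Pi.single_apply]

theorem map_apply (f : Fin n → Fin m) (t : TopSimplex n) (j : Fin m) :
    stdSimplex.map f t j = ∑ i with f i = j, t i := by
  rw [stdSimplex.map_coe]
  simp [FunOnFinite.linearMap_apply_apply]

theorem continuous_convexComb (v : Fin n → TopSimplex m) :
    Continuous fun t : TopSimplex n ↦ convexComb t v :=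
  Continuous.subtype_mk (continuous_finsetSum _ fun i _ ↦
    ((continuous_apply i).comp continuous_subtype_val).smul continuous_const) _

theorem convexComb_map (f : Fin n → Fin k) (t : TopSimplex n) (v : Fin k → TopSimplex m) :
    convexComb (stdSimplex.map f t) v = convexComb t (v ∘ f) := by
  refine ext_apply fun j ↦ ?_
  simp only [convexComb_apply, map_apply, Finset.sum_mul, Function.comp]
  rw [← Finset.sum_fiberwise (s := Finset.univ) (g := f)]
  refine Finset.sum_congr rfl fun i _ ↦ Finset.sum_congr rfl fun k hk ↦ ?_
  rw [(Finset.mem_filter.1 hk).2]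

theorem convexComb_convexComb (t : TopSimplex k) (s : Fin k → TopSimplex n)
    (v : Fin n → TopSimplex m) :
    convexComb (convexComb t s) v = convexComb t fun i ↦ convexComb (s i) v := by
  refine ext_apply fun j ↦ ?_
  simp only [convexComb_apply, Finset.sum_mul, Finset.mul_sum, mul_assoc]
  exact Finset.sum_comm

theorem convexComb_vertex (t : TopSimplex n) : convexComb t stdSimplex.vertex = t := by
  refine ext_apply fun j ↦ ?_
  simp [convexComb_apply, vertex_apply]

theorem vertex_convexComb (i : Fin n) (v : Fin n → TopSimplex m) :
    convexComb (stdSimplex.vertex i) v = v i := by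
  refine ext_apply fun j ↦ ?_
  simp [convexComb_apply, vertex_apply]

/-- The barycenter of a nonempty tuple of points. -/
noncomputable def barycenterOf (v : Fin (n + 1) → TopSimplex m) : TopSimplex m :=
  convexComb stdSimplex.barycenter v

/-- Maps between simplices which preserve convex combinations. -/
def IsAffine (φ : TopSimplex m → TopSimplex k) : Prop :=
  ∀ (n : ℕ) (t : TopSimplex n) (v : Fin n → TopSimplex m),
    φ (convexComb t v) = convexComb t (φ ∘ v)

theorem IsAffine.map_barycenterOf {φ : TopSimplex m → TopSimplex k} (hφ : IsAffine φ)
    (v : Fin (n + 1) → TopSimplex m) : φ (barycenterOf v) = barycenterOf (φ ∘ v) :=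
  hφ _ _ _

end TopSimplex

namespace TupleChain

open TopSimplex

variable {m k n : ℕ}

/-- Barycentric subdivision: the cone from the barycenter over the subdivided boundary. -/
noncomputable def subdivision : (n : ℕ) →
    TupleChain R (TopSimplex m) n →ₗ[R] TupleChain R (TopSimplex m) n
  | 0 => LinearMap.id
  | n + 1 => Finsupp.linearCombination R fun v ↦
      cone (barycenterOf v) (subdivision n (boundary (.single v 1)))

/-- A chain homotopy from the identity to barycentric subdivision. -/
noncomputable def subdivisionHomotopy : (n : ℕ) →
    TupleChain R (TopSimplex m) n →ₗ[R] TupleChain R (TopSimplex m) (n + 1)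
  | 0 => 0
  | n + 1 => Finsupp.linearCombination R fun v ↦
      cone (barycenterOf v) (.single v 1 - subdivisionHomotopy n (boundary (.single v 1)))

theorem subdivision_single (v : Fin (n + 1) → TopSimplex m) :
    subdivision (n + 1) (.single v (1 : R)) =
      cone (barycenterOf v) (subdivision n (boundary (.single v 1))) := by
  simp [subdivision]

theorem subdivisionHomotopy_single (v : Fin (n + 1) → TopSimplex m) :
    subdivisionHomotopy (n + 1) (.single v (1 : R)) = cone (barycenterOf v)
      (.single v 1 - subdivisionHomotopy n (boundary (.single v 1))) := by
  simp [subdivisionHomotopy]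

theorem boundary_subdivision (c : TupleChain R (TopSimplex m) (n + 1)) :
    boundary (subdivision (n + 1) c) = subdivision n (boundary c) := by
  induction n with
  | zero =>
    refine linearMap_congr_of_single (f := boundary ∘ₗ subdivision 1)
      (g := subdivision 0 ∘ₗ boundary) (fun v ↦ ?_) c
    simp only [LinearMap.comp_apply, subdivision_single, boundary_cone_zero]
  | succ n ih =>
    refine linearMap_congr_of_single (f := boundary ∘ₗ subdivision (n + 2))
      (g := subdivision (n + 1) ∘ₗ boundary) (fun v ↦ ?_) c
    simp only [LinearMap.comp_apply, subdivision_single, boundary_cone, ih, boundary_boundary,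
      map_zero, sub_zero]

theorem boundary_subdivisionHomotopy (c : TupleChain R (TopSimplex m) (n + 1)) :
    boundary (subdivisionHomotopy (n + 1) c) =
      c - subdivision (n + 1) c - subdivisionHomotopy n (boundary c) := by
  induction n with
  | zero =>
    refine linearMap_congr_of_single (f := boundary ∘ₗ subdivisionHomotopy 1)
      (g := .id - subdivision 1 - subdivisionHomotopy 0 ∘ₗ boundary) (fun v ↦ ?_) c
    simp [boundary_cone, subdivisionHomotopy, subdivision]
  | succ n ih =>
    refine linearMap_congr_of_single (f := boundary ∘ₗ subdivisionHomotopy (n + 2))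
      (g := .id - subdivision (n + 2) - subdivisionHomotopy (n + 1) ∘ₗ boundary) (fun v ↦ ?_) c
    simp only [LinearMap.comp_apply, subdivisionHomotopy_single, boundary_cone, subdivision_single,
      map_sub, ih, boundary_boundary, LinearMap.sub_apply, LinearMap.id_apply, map_zero]
    abel

theorem map_subdivision {φ : TopSimplex m → TopSimplex k} (hφ : IsAffine φ)
    (c : TupleChain R (TopSimplex m) n) : map φ (subdivision n c) = subdivision n (map φ c) := by
  induction n with
  | zero => rfl
  | succ n ih =>
    refine linearMap_congr_of_single (f := map φ ∘ₗ subdivision (n + 1))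
      (g := subdivision (n + 1) ∘ₗ map φ) (fun v ↦ ?_) c
    simp only [LinearMap.comp_apply, subdivision_single, map_cone, ih, map_boundary,
      hφ.map_barycenterOf, map_single]

theorem map_subdivisionHomotopy {φ : TopSimplex m → TopSimplex k} (hφ : IsAffine φ)
    (c : TupleChain R (TopSimplex m) n) :
    map φ (subdivisionHomotopy n c) = subdivisionHomotopy n (map φ c) := by
  induction n with
  | zero => simp [subdivisionHomotopy]
  | succ n ih =>
    refine linearMap_congr_of_single (f := map φ ∘ₗ subdivisionHomotopy (n + 1))
      (g := subdivisionHomotopy (n + 1) ∘ₗ map φ) (fun v ↦ ?_) c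
    simp only [LinearMap.comp_apply, subdivisionHomotopy_single, map_cone, map_sub, ih,
      map_boundary, hφ.map_barycenterOf, map_single]

end TupleChain

/-! ### Singular chains -/

/-- Singular chains on the simplex with `n` vertices. The index is the degree plus one, and `n = 0`
is the augmentation, so that homology computed with these chains is reduced homology. -/
abbrev SingularChain (R : Type*) [CommRing R] (X : Type*) [TopologicalSpace X] (n : ℕ) :=
  C(TopSimplex n, X) →₀ R

namespace TopSimplex

variable {m n : ℕ}

/-- The inclusion of the `i`-th face, opposite to the `i`-th vertex. -/
noncomputable def face (i : Fin (n + 1)) : C(TopSimplex n, TopSimplex (n + 1)) :=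
  ⟨stdSimplex.map i.succAbove, stdSimplex.continuous_map _⟩

/-- The affine simplex with vertices `v`. -/
noncomputable def affineSimplex (v : Fin n → TopSimplex m) : C(TopSimplex n, TopSimplex m) :=
  ⟨fun t ↦ convexComb t v, continuous_convexComb v⟩

theorem affineSimplex_comp_face (v : Fin (n + 1) → TopSimplex m) (i : Fin (n + 1)) :
    (affineSimplex v).comp (face i) = affineSimplex (v ∘ i.succAbove) :=
  ContinuousMap.ext fun _ ↦ convexComb_map _ _ _

theorem affineSimplex_vertex (n : ℕ) :
    affineSimplex stdSimplex.vertex = ContinuousMap.id (TopSimplex n) :=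
  ContinuousMap.ext convexComb_vertex

theorem isAffine_affineSimplex (v : Fin n → TopSimplex m) : IsAffine (affineSimplex v) :=
  fun _ _ _ ↦ convexComb_convexComb _ _ _

theorem face_eq_affineSimplex (i : Fin (n + 1)) :
    face i = affineSimplex (stdSimplex.vertex ∘ i.succAbove) := by
  rw [← affineSimplex_comp_face, affineSimplex_vertex, ContinuousMap.id_comp]

theorem isAffine_face (i : Fin (n + 1)) : IsAffine (face i) := by
  rw [face_eq_affineSimplex]
  exact isAffine_affineSimplex _

theorem face_comp_vertex (i : Fin (n + 1)) :
    face i ∘ stdSimplex.vertex = stdSimplex.vertex ∘ i.succAbove :=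
  funext fun _ ↦ stdSimplex.map_vertex _ _

end TopSimplex

namespace SingularChain

open TopSimplex

variable {X Y Z : Type*} [TopologicalSpace X] [TopologicalSpace Y] [TopologicalSpace Z]
variable {m n p q : ℕ}

/-- The alternating sum of the faces of a singular simplex. -/
noncomputable def boundary : SingularChain R X (n + 1) →ₗ[R] SingularChain R X n :=
  ∑ i : Fin (n + 1), (-1 : R) ^ (i : ℕ) • Finsupp.lmapDomain R R (·.comp (face i))

/-- The chain map induced by a continuous map. -/
noncomputable def map (f : C(X, Y)) : SingularChain R X n →ₗ[R] SingularChain R Y n :=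
  Finsupp.lmapDomain R R f.comp

theorem boundary_single (σ : C(TopSimplex (n + 1), X)) (r : R) :
    boundary (.single σ r) =
      ∑ i : Fin (n + 1), (-1 : R) ^ (i : ℕ) • Finsupp.single (σ.comp (face i)) r := by
  simp [boundary, Finsupp.mapDomain_single]

theorem map_single (f : C(X, Y)) (σ : C(TopSimplex n, X)) (r : R) :
    map f (.single σ r) = .single (f.comp σ) r := by
  simp [map, Finsupp.mapDomain_single]

theorem map_map (g : C(Y, Z)) (f : C(X, Y)) (c : SingularChain R X n) :
    map g (map f c) = map (g.comp f) c :=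
  linearMap_congr_of_single (f := map g ∘ₗ map f) (fun σ ↦ by
    simp only [LinearMap.comp_apply, map_single, ContinuousMap.comp_assoc]) c

theorem map_id (c : SingularChain R X n) : map (ContinuousMap.id X) c = c :=
  linearMap_congr_of_single (g := .id) (fun σ ↦ by
    rw [map_single, ContinuousMap.id_comp, LinearMap.id_apply]) c

theorem map_boundary (f : C(X, Y)) (c : SingularChain R X (n + 1)) :
    map f (boundary c) = boundary (map f c) :=
  linearMap_congr_of_single (f := map f ∘ₗ boundary) (g := boundary ∘ₗ map f) (fun σ ↦ by
    simp only [LinearMap.comp_apply, map_single, boundary_single, map_sum, map_smul,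
      ContinuousMap.comp_assoc]) c

end SingularChain

namespace TupleChain

open TopSimplex

variable {m k n : ℕ}

/-- The singular chain of affine simplices spanned by the tuples of a chain. -/
noncomputable def realize :
    TupleChain R (TopSimplex m) n →ₗ[R] SingularChain R (TopSimplex m) n :=
  Finsupp.lmapDomain R R affineSimplex

/-- The tuple of vertices of the standard simplex. -/
noncomputable def fundamental (R : Type*) [CommRing R] (n : ℕ) : TupleChain R (TopSimplex n) n :=
  .single stdSimplex.vertex 1

theorem realize_single (v : Fin n → TopSimplex m) (r : R) :
    realize (.single v r) = .single (affineSimplex v) r := by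
  simp [realize, Finsupp.mapDomain_single]

theorem realize_boundary (c : TupleChain R (TopSimplex m) (n + 1)) :
    realize (boundary c) = SingularChain.boundary (realize c) :=
  linearMap_congr_of_single (f := realize ∘ₗ boundary) (g := SingularChain.boundary ∘ₗ realize)
    (fun v ↦ by
      simp only [LinearMap.comp_apply, realize_single, SingularChain.boundary_single,
        boundary_single, map_sum, map_smul, affineSimplex_comp_face]) c

theorem map_realize {φ : C(TopSimplex m, TopSimplex k)} (hφ : IsAffine φ)
    (c : TupleChain R (TopSimplex m) n) :
    SingularChain.map φ (realize c) = realize (map φ c) := by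
  refine linearMap_congr_of_single (f := SingularChain.map φ ∘ₗ realize) (g := realize ∘ₗ map φ)
    (fun v ↦ ?_) c
  simp only [LinearMap.comp_apply, realize_single, SingularChain.map_single, map_single]
  congr 1
  exact ContinuousMap.ext fun t ↦ hφ _ t v

theorem boundary_fundamental (n : ℕ) : boundary (fundamental R (n + 1)) =
    ∑ i : Fin (n + 1), (-1 : R) ^ (i : ℕ) • map (face i) (fundamental R n) := by
  simp only [fundamental, boundary_single, map_single, face_comp_vertex]

theorem map_affineSimplex_fundamental (v : Fin n → TopSimplex m) :
    map (affineSimplex v) (fundamental R n) = .single v 1 := by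
  rw [fundamental, map_single]
  congr 1
  exact funext fun i ↦ vertex_convexComb i v

end TupleChain

namespace SingularChain

open TopSimplex
open TupleChain (realize fundamental)

variable {X Y : Type*} [TopologicalSpace X] [TopologicalSpace Y] {m n p q : ℕ}

theorem single_eq_map_fundamental (σ : C(TopSimplex n, X)) :
    .single σ 1 = map σ (realize (fundamental R n)) := by
  rw [fundamental, TupleChain.realize_single, map_single, affineSimplex_vertex,
    ContinuousMap.comp_id]

theorem boundary_boundary (c : SingularChain R X (n + 2)) : boundary (boundary c) = 0 :=
  linearMap_congr_of_single (f := boundary ∘ₗ boundary) (g := 0) (fun σ ↦ by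
    rw [LinearMap.comp_apply, single_eq_map_fundamental, ← map_boundary, ← map_boundary,
      ← TupleChain.realize_boundary, ← TupleChain.realize_boundary, TupleChain.boundary_boundary,
      map_zero, map_zero, LinearMap.zero_apply]) c

/-- The natural operation on singular chains which sends a singular simplex `σ` to the image
under `σ` of a universal chain `u` on the standard simplex. -/
noncomputable def ofUniversal (u : TupleChain R (TopSimplex p) q) :
    SingularChain R X p →ₗ[R] SingularChain R X q :=
  Finsupp.linearCombination R fun σ ↦ map σ (realize u)

theorem ofUniversal_single (u : TupleChain R (TopSimplex p) q) (σ : C(TopSimplex p, X)) :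
    ofUniversal u (.single σ 1) = map σ (realize u) := by
  simp [ofUniversal]

theorem map_ofUniversal (u : TupleChain R (TopSimplex p) q) (f : C(X, Y))
    (c : SingularChain R X p) : map f (ofUniversal u c) = ofUniversal u (map f c) :=
  linearMap_congr_of_single (f := map f ∘ₗ ofUniversal u) (g := ofUniversal u ∘ₗ map f)
    (fun σ ↦ by simp only [LinearMap.comp_apply, ofUniversal_single, map_single, map_map]) c

theorem ofUniversal_boundary_single
    (G : ∀ m, TupleChain R (TopSimplex m) p →ₗ[R] TupleChain R (TopSimplex m) q)
    (hG : ∀ (i : Fin (p + 1)) c, TupleChain.map (face i) (G p c) =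
      G (p + 1) (TupleChain.map (face i) c)) (σ : C(TopSimplex (p + 1), X)) :
    ofUniversal (G p (fundamental R p)) (boundary (.single σ 1)) =
      map σ (realize (G (p + 1) (TupleChain.boundary (fundamental R (p + 1))))) := by
  rw [boundary_single, TupleChain.boundary_fundamental]
  simp only [map_sum, map_smul, ofUniversal_single, ← hG]
  refine Finset.sum_congr rfl fun i _ ↦ ?_
  rw [← TupleChain.map_realize (isAffine_face i), map_map]

/-- Barycentric subdivision of singular chains. -/
noncomputable def subdivision : SingularChain R X n →ₗ[R] SingularChain R X n :=
  ofUniversal (TupleChain.subdivision n (fundamental R n))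

/-- A natural chain homotopy from the identity to barycentric subdivision. -/
noncomputable def subdivisionHomotopy : SingularChain R X n →ₗ[R] SingularChain R X (n + 1) :=
  ofUniversal (TupleChain.subdivisionHomotopy n (fundamental R n))

theorem boundary_subdivision (c : SingularChain R X (n + 1)) :
    boundary (subdivision c) = subdivision (boundary c) := by
  refine linearMap_congr_of_single (f := boundary ∘ₗ subdivision) (g := subdivision ∘ₗ boundary)
    (fun σ ↦ ?_) c
  simp only [LinearMap.comp_apply, subdivision]
  rw [ofUniversal_boundary_single (fun m ↦ TupleChain.subdivision n)
    (fun i c ↦ TupleChain.map_subdivision (isAffine_face i) c), ofUniversal_single, ← map_boundary,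
    ← TupleChain.realize_boundary, TupleChain.boundary_subdivision]

theorem boundary_subdivisionHomotopy (c : SingularChain R X (n + 1)) :
    boundary (subdivisionHomotopy c) = c - subdivision c - subdivisionHomotopy (boundary c) := by
  refine linearMap_congr_of_single (f := boundary ∘ₗ subdivisionHomotopy)
    (g := .id - subdivision - subdivisionHomotopy ∘ₗ boundary) (fun σ ↦ ?_) c
  simp only [LinearMap.comp_apply, subdivision, subdivisionHomotopy, LinearMap.sub_apply,
    LinearMap.id_apply]
  rw [ofUniversal_boundary_single (fun m ↦ TupleChain.subdivisionHomotopy n)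
      (fun i c ↦ TupleChain.map_subdivisionHomotopy (isAffine_face i) c),
    ofUniversal_single, ofUniversal_single, ← map_boundary, ← TupleChain.realize_boundary,
    TupleChain.boundary_subdivisionHomotopy, map_sub, map_sub, map_sub, map_sub,
    ← single_eq_map_fundamental]

theorem subdivision_realize (c : TupleChain R (TopSimplex m) n) :
    subdivision (realize c) = realize (TupleChain.subdivision n c) := by
  refine linearMap_congr_of_single (f := subdivision ∘ₗ realize)
    (g := realize ∘ₗ TupleChain.subdivision n) (fun v ↦ ?_) c
  rw [LinearMap.comp_apply, LinearMap.comp_apply, TupleChain.realize_single, subdivision,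
    ofUniversal_single, TupleChain.map_realize (isAffine_affineSimplex v),
    TupleChain.map_subdivision (isAffine_affineSimplex v),
    TupleChain.map_affineSimplex_fundamental]

theorem map_subdivision (f : C(X, Y)) (c : SingularChain R X n) :
    map f (subdivision c) = subdivision (map f c) :=
  map_ofUniversal _ _ _

end SingularChain

/-! ### Mesh of the iterated subdivision -/

namespace TopSimplex

variable {m n : ℕ} {D : ℝ}

theorem dist_convexComb_le {v : Fin n → TopSimplex m} {x : TopSimplex m}
    (h : ∀ i, dist (v i) x ≤ D) (t : TopSimplex n) : dist (convexComb t v) x ≤ D :=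
  (convex_closedBall (x : Fin m → ℝ) D).sum_mem (fun i _ ↦ t.2.1 i) t.2.2 fun i _ ↦ h i

theorem barycenterOf_sub_eq_smul_sum (v : Fin (n + 1) → TopSimplex m) (i : Fin (n + 1)) :
    (barycenterOf v).1 - (v i).1 = (n + 1 : ℝ)⁻¹ • ∑ k ∈ univ.erase i, ((v k).1 - (v i).1) := by
  have hb : (barycenterOf v).1 = (n + 1 : ℝ)⁻¹ • ∑ k, (v k).1 := by
    rw [Finset.smul_sum]
    change ∑ k, (stdSimplex.barycenter (𝕜 := ℝ)).1 k • (v k).1 = _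
    refine Finset.sum_congr rfl fun k _ ↦ ?_
    rw [stdSimplex.barycenter_apply, Fintype.card_fin, Nat.cast_succ]
  have hi : (v i).1 = (n + 1 : ℝ)⁻¹ • ∑ _k : Fin (n + 1), (v i).1 := by
    rw [Finset.sum_const, Finset.card_univ, Fintype.card_fin, ← Nat.cast_smul_eq_nsmul ℝ, smul_smul,
      Nat.cast_succ, inv_mul_cancel₀ (by positivity), one_smul]
  rw [Finset.sum_erase _ (sub_self _), Finset.sum_sub_distrib, smul_sub, ← hb, ← hi]

theorem dist_barycenterOf_le {v : Fin (n + 1) → TopSimplex m} (h : ∀ i j, dist (v i) (v j) ≤ D)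
    (i : Fin (n + 1)) : dist (barycenterOf v) (v i) ≤ n / (n + 1) * D := by
  have hsum : ‖∑ k ∈ univ.erase i, ((v k).1 - (v i).1)‖ ≤ n * D := by
    refine (norm_sum_le_of_le (univ.erase i)
      fun k _ ↦ (dist_eq_norm _ _).symm.trans_le (h k i)).trans_eq ?_
    simp
  rw [Subtype.dist_eq, dist_eq_norm, barycenterOf_sub_eq_smul_sum, norm_smul, norm_inv,
    Real.norm_of_nonneg (by positivity), div_mul_eq_mul_div, ← div_eq_inv_mul]
  gcongr

/-- The `k`-tuples in the convex hull of `v` whose points are pairwise at distance at most `D`. -/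
def smallTuplesInHull (v : Fin n → TopSimplex m) (k : ℕ) (D : ℝ) : Set (Fin k → TopSimplex m) :=
  {w | (∀ i, w i ∈ Set.range (convexComb · v)) ∧ ∀ i j, dist (w i) (w j) ≤ D}

theorem cons_barycenterOf_mem_smallTuplesInHull {N : ℕ} (hn : n ≤ N)
    {v : Fin (n + 1) → TopSimplex m} (h : ∀ i j, dist (v i) (v j) ≤ D) (i : Fin (n + 1))
    {w : Fin n → TopSimplex m}
    (hw : w ∈ smallTuplesInHull (v ∘ i.succAbove) n (N / (N + 1) * D)) :
    (Fin.cons (barycenterOf v) w : Fin (n + 1) → TopSimplex m) ∈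
      smallTuplesInHull v (n + 1) (N / (N + 1) * D) := by
  obtain ⟨hull, small⟩ := hw
  have hull' (k : Fin n) : w k ∈ Set.range (convexComb · v) := by
    obtain ⟨t, ht⟩ := hull k
    exact ⟨stdSimplex.map i.succAbove t, (convexComb_map _ _ _).trans ht⟩
  have hD : 0 ≤ D := dist_nonneg.trans (h 0 0)
  have ratio_le : (n : ℝ) / (n + 1) ≤ N / (N + 1) := by
    rw [div_le_div_iff₀ (by positivity) (by positivity)]
    have : (n : ℝ) ≤ N := mod_cast hn
    linarith
  have center_near (k : Fin n) : dist (w k) (barycenterOf v) ≤ N / (N + 1) * D := by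
    obtain ⟨t, ht⟩ := hull' k
    rw [← ht]
    refine dist_convexComb_le (fun j ↦ ?_) t
    rw [dist_comm]
    exact (dist_barycenterOf_le h j).trans (by gcongr)
  refine ⟨Fin.cases ⟨_, rfl⟩ hull', Fin.cases (Fin.cases ?_ fun l ↦ ?_)
    fun k ↦ Fin.cases (center_near k) (small k)⟩
  · rw [dist_self]
    positivity
  · rw [dist_comm]
    exact center_near l

end TopSimplex

namespace TupleChain

open TopSimplex

variable {m n N : ℕ} {D : ℝ}

theorem subdivision_single_mem_supported (hn : n ≤ N + 1) {v : Fin n → TopSimplex m}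
    (h : ∀ i j, dist (v i) (v j) ≤ D) :
    subdivision n (.single v 1) ∈
      Finsupp.supported R R (smallTuplesInHull v n (N / (N + 1) * D)) := by
  induction n with
  | zero => exact Finsupp.single_mem_supported _ _ ⟨fun i ↦ i.elim0, fun i ↦ i.elim0⟩
  | succ n ih =>
    rw [subdivision_single, boundary_single, map_sum, map_sum]
    refine Submodule.sum_mem _ fun i _ ↦ ?_
    rw [map_smul, map_smul]
    refine Submodule.smul_mem _ _ (map_mem_of_mem_supported (fun w hw ↦ ?_)
      (ih (v := v ∘ i.succAbove) (by lia) fun _ _ ↦ h _ _))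
    rw [cone_single]
    exact Finsupp.single_mem_supported _ _
      (cons_barycenterOf_mem_smallTuplesInHull (by lia) h i hw)

theorem iterate_subdivision_single_mem_supported (hn : n ≤ N + 1) {v : Fin n → TopSimplex m}
    (h : ∀ i j, dist (v i) (v j) ≤ D) (k : ℕ) :
    (subdivision n)^[k] (.single v 1) ∈
      Finsupp.supported R R {w | ∀ i j, dist (w i) (w j) ≤ (N / (N + 1)) ^ k * D} := by
  induction k with
  | zero => exact Finsupp.single_mem_supported _ _ (by simpa using h)
  | succ k ih =>
    rw [Function.iterate_succ_apply']
    refine map_mem_of_mem_supported (fun w hw ↦ ?_) ih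
    refine Finsupp.supported_mono ?_ (subdivision_single_mem_supported hn hw)
    rintro u ⟨-, hu⟩ i j
    rw [pow_succ', mul_assoc]
    exact hu i j

end TupleChain

/-! ### Cycles, supports and small chains -/

instance : IsEmpty (TopSimplex 0) :=
  ⟨fun t ↦ zero_ne_one (Finset.sum_empty.symm.trans t.2.2)⟩

namespace SingularChain

open TopSimplex
open TupleChain (realize fundamental)

variable {X Y : Type*} [TopologicalSpace X] [TopologicalSpace Y] {n : ℕ}
variable {A B U V : Set X} {C : Set Y}

/-- The cycles. A chain on the empty simplex has no boundary, so all of these are cycles. -/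
noncomputable def cycles (R : Type*) [CommRing R] (X : Type*) [TopologicalSpace X] :
    (n : ℕ) → Submodule R (SingularChain R X n)
  | 0 => ⊤
  | _ + 1 => LinearMap.ker boundary

/-- The chains whose simplices lie in `A`; they stand for the chains of the subspace `A`. -/
def supportedIn (R : Type*) [CommRing R] (n : ℕ) (A : Set X) : Submodule R (SingularChain R X n) :=
  Finsupp.supported R R {σ | ∀ t, σ t ∈ A}

/-- The cycles of the subspace `A`. -/
noncomputable def cyclesIn (R : Type*) [CommRing R] (n : ℕ) (A : Set X) :
    Submodule R (SingularChain R X n) :=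
  cycles R X n ⊓ supportedIn R n A

/-- The boundaries of the subspace `A`. -/
noncomputable def boundariesIn (R : Type*) [CommRing R] (n : ℕ) (A : Set X) :
    Submodule R (SingularChain R X n) :=
  (supportedIn R (n + 1) A).map boundary

theorem mem_cyclesIn_succ {c : SingularChain R X (n + 1)} :
    c ∈ cyclesIn R (n + 1) A ↔ boundary c = 0 ∧ c ∈ supportedIn R (n + 1) A :=
  Iff.rfl

theorem supportedIn_univ : supportedIn R n (Set.univ : Set X) = ⊤ := by
  simp [supportedIn]

theorem supportedIn_mono (h : A ⊆ B) : supportedIn R n A ≤ supportedIn R n B :=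
  Finsupp.supported_mono fun _ hσ t ↦ h (hσ t)

theorem boundariesIn_mono (h : A ⊆ B) : boundariesIn R n A ≤ boundariesIn R n B :=
  Submodule.map_mono (supportedIn_mono h)

theorem supportedIn_inter : supportedIn R n (A ∩ B) = supportedIn R n A ⊓ supportedIn R n B := by
  simp only [supportedIn, ← Finsupp.supported_inter, Set.mem_inter_iff, forall_and]
  rfl

theorem map_mem_supportedIn {f : C(X, Y)} (hf : Set.MapsTo f A C) {c : SingularChain R X n}
    (hc : c ∈ supportedIn R n A) : map f c ∈ supportedIn R n C := by
  refine map_mem_of_mem_supported (fun σ hσ ↦ ?_) hc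
  rw [map_single]
  exact Finsupp.single_mem_supported _ _ fun t ↦ hf (hσ t)

theorem ofUniversal_mem_supportedIn {p q : ℕ} (u : TupleChain R (TopSimplex p) q)
    {c : SingularChain R X p} (hc : c ∈ supportedIn R p A) :
    ofUniversal u c ∈ supportedIn R q A := by
  refine map_mem_of_mem_supported (fun σ hσ ↦ ?_) hc
  rw [ofUniversal_single]
  refine map_mem_supportedIn (A := Set.univ) (fun t _ ↦ hσ t) ?_
  rw [supportedIn_univ]
  trivial

theorem boundary_mem_supportedIn {c : SingularChain R X (n + 1)}
    (hc : c ∈ supportedIn R (n + 1) A) : boundary c ∈ supportedIn R n A := by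
  refine map_mem_of_mem_supported (fun σ hσ ↦ ?_) hc
  rw [boundary_single]
  exact Submodule.sum_mem _ fun i _ ↦ Submodule.smul_mem _ _
    (Finsupp.single_mem_supported _ _ fun t ↦ hσ _)

theorem boundary_mem_cycles (c : SingularChain R X (n + 1)) : boundary c ∈ cycles R X n := by
  cases n with
  | zero => trivial
  | succ n => exact boundary_boundary c

theorem map_mem_cycles (f : C(X, Y)) {z : SingularChain R X n} (hz : z ∈ cycles R X n) :
    map f z ∈ cycles R Y n := by
  cases n with
  | zero => trivial
  | succ n =>
    change boundary _ = 0
    rw [← map_boundary, show boundary z = 0 from hz, map_zero]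

theorem map_mem_cyclesIn {f : C(X, Y)} (hf : Set.MapsTo f A C) {z : SingularChain R X n}
    (hz : z ∈ cyclesIn R n A) : map f z ∈ cyclesIn R n C :=
  ⟨map_mem_cycles f hz.1, map_mem_supportedIn hf hz.2⟩

theorem map_mem_boundariesIn {f : C(X, Y)} (hf : Set.MapsTo f A C) {z : SingularChain R X n}
    (hz : z ∈ boundariesIn R n A) : map f z ∈ boundariesIn R n C := by
  obtain ⟨c, hc, rfl⟩ := hz
  exact ⟨map f c, map_mem_supportedIn hf hc, (map_boundary f c).symm⟩

theorem map_mem_range_boundary (f : C(X, Y)) {z : SingularChain R X n}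
    (hz : z ∈ LinearMap.range boundary) : map f z ∈ LinearMap.range boundary := by
  obtain ⟨c, rfl⟩ := hz
  exact ⟨map f c, (map_boundary f c).symm⟩

theorem cycles_le_range_boundary_of_retract {i : C(X, Y)} {r : C(Y, X)}
    (hri : r.comp i = .id X) (hY : cycles R Y n ≤ LinearMap.range boundary) :
    cycles R X n ≤ LinearMap.range boundary := by
  intro z hz
  have h := map_mem_range_boundary r (hY (map_mem_cycles i hz))
  rwa [map_map, hri, map_id] at h

theorem subdivision_zero (c : SingularChain R X 0) : subdivision c = c :=
  linearMap_congr_of_single (g := .id) (fun σ ↦ by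
    rw [subdivision, ofUniversal_single, LinearMap.id_apply, single_eq_map_fundamental]
    rfl) c

theorem subdivision_mem_supportedIn {c : SingularChain R X n} (hc : c ∈ supportedIn R n A) :
    subdivision c ∈ supportedIn R n A :=
  ofUniversal_mem_supportedIn _ hc

theorem subdivision_mem_cycles {z : SingularChain R X n} (hz : z ∈ cycles R X n) :
    subdivision z ∈ cycles R X n := by
  cases n with
  | zero => trivial
  | succ n =>
    change boundary _ = 0
    rw [boundary_subdivision, show boundary z = 0 from hz, map_zero]

theorem sub_subdivision_mem_boundariesIn {z : SingularChain R X n} (hz : z ∈ cyclesIn R n A) :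
    z - subdivision z ∈ boundariesIn R n A := by
  cases n with
  | zero =>
    rw [subdivision_zero, sub_self]
    exact Submodule.zero_mem _
  | succ n =>
    refine ⟨subdivisionHomotopy z, ofUniversal_mem_supportedIn _ hz.2, ?_⟩
    rw [boundary_subdivisionHomotopy, show boundary z = 0 from hz.1, map_zero, sub_zero]

theorem iterate_subdivision_mem_supportedIn {c : SingularChain R X n}
    (hc : c ∈ supportedIn R n A) (k : ℕ) : subdivision^[k] c ∈ supportedIn R n A :=
  Set.MapsTo.iterate (fun _ ↦ subdivision_mem_supportedIn) k hc

theorem iterate_subdivision_mem_cyclesIn {z : SingularChain R X n} (hz : z ∈ cyclesIn R n A)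
    (k : ℕ) : subdivision^[k] z ∈ cyclesIn R n A :=
  ⟨Set.MapsTo.iterate (fun _ ↦ subdivision_mem_cycles) k hz.1,
    iterate_subdivision_mem_supportedIn hz.2 k⟩

theorem boundary_iterate_subdivision (c : SingularChain R X (n + 1)) (k : ℕ) :
    boundary (subdivision^[k] c) = subdivision^[k] (boundary c) :=
  Function.Semiconj.iterate_right boundary_subdivision k c

theorem map_iterate_subdivision (f : C(X, Y)) (c : SingularChain R X n) (k : ℕ) :
    map f (subdivision^[k] c) = subdivision^[k] (map f c) :=
  Function.Semiconj.iterate_right (map_subdivision f) k c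

theorem iterate_subdivision_realize {m : ℕ} (c : TupleChain R (TopSimplex m) n) (k : ℕ) :
    subdivision^[k] (realize c) = realize ((TupleChain.subdivision n)^[k] c) :=
  (Function.Semiconj.iterate_right (fun c ↦ (subdivision_realize c).symm) k c).symm

theorem sub_iterate_subdivision_mem_boundariesIn {z : SingularChain R X n}
    (hz : z ∈ cyclesIn R n A) (k : ℕ) : z - subdivision^[k] z ∈ boundariesIn R n A := by
  induction k with
  | zero => simp
  | succ k ih =>
    rw [Function.iterate_succ_apply', ← sub_add_sub_cancel z (subdivision^[k] z)]
    exact add_mem ih (sub_subdivision_mem_boundariesIn (iterate_subdivision_mem_cyclesIn hz k))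

theorem exists_subdivision_single_realize_small {ι : Type*} {c : ι → Set (TopSimplex (n + 1))}
    (hc : ∀ i, IsOpen (c i)) (hcover : ⋃ i, c i = Set.univ) :
    ∃ k, (TupleChain.subdivision (n + 1))^[k] (fundamental R (n + 1)) ∈
      Finsupp.supported R R {w | ∃ i, Set.range (affineSimplex w) ⊆ c i} := by
  obtain ⟨δ, δpos, hδ⟩ := lebesgue_number_lemma_of_metric isCompact_univ hc hcover.ge
  have diam_le (i j : Fin (n + 1)) : dist (stdSimplex.vertex i : TopSimplex (n + 1))
      (stdSimplex.vertex j) ≤ Metric.diam (Set.univ : Set (TopSimplex (n + 1))) :=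
    Metric.dist_le_diam_of_mem isCompact_univ.isBounded trivial trivial
  have ratio_lt_one : (n : ℝ) / (n + 1) < 1 := (div_lt_one (by positivity)).2 (lt_add_one _)
  obtain ⟨k, hk⟩ : ∃ k, ((n : ℝ) / (n + 1)) ^ k *
      Metric.diam (Set.univ : Set (TopSimplex (n + 1))) < δ := by
    have := (tendsto_pow_atTop_nhds_zero_of_lt_one (by positivity) ratio_lt_one).mul_const
      (Metric.diam (Set.univ : Set (TopSimplex (n + 1))))
    rw [zero_mul] at this
    exact (this.eventually_lt_const δpos).exists
  refine ⟨k, Finsupp.supported_mono (fun w hw ↦ ?_)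
    (TupleChain.iterate_subdivision_single_mem_supported le_rfl diam_le k)⟩
  obtain ⟨i, hi⟩ := hδ (w 0) trivial
  refine ⟨i, Set.range_subset_iff.2 fun t ↦ hi ?_⟩
  exact (dist_convexComb_le (fun j ↦ hw j 0) t).trans_lt hk

theorem exists_iterate_subdivision_single_mem_sup (hU : IsOpen U) (hV : IsOpen V)
    {σ : C(TopSimplex n, X)} (hσ : ∀ t, σ t ∈ U ∪ V) :
    ∃ k, subdivision^[k] (.single σ (1 : R)) ∈ supportedIn R n U ⊔ supportedIn R n V := by
  cases n with
  | zero =>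
    refine ⟨0, Submodule.mem_sup_left (Finsupp.single_mem_supported _ _ fun t ↦ ?_)⟩
    exact isEmptyElim t
  | succ n =>
    obtain ⟨k, hk⟩ := exists_subdivision_single_realize_small (R := R)
      (c := fun b : Bool ↦ σ ⁻¹' cond b U V)
      (Bool.forall_bool.2 ⟨hV.preimage σ.continuous, hU.preimage σ.continuous⟩)
      (Set.eq_univ_of_forall fun t ↦ Set.mem_iUnion.2 (Bool.exists_bool.2 (hσ t).symm))
    refine ⟨k, ?_⟩
    rw [single_eq_map_fundamental, ← map_iterate_subdivision, iterate_subdivision_realize]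
    refine map_mem_of_mem_supported (f := map σ ∘ₗ realize) (fun w hw ↦ ?_) hk
    obtain ⟨b, hb⟩ := hw
    have hmem : map σ (realize (.single w 1)) ∈ supportedIn R (n + 1) (cond b U V) := by
      rw [TupleChain.realize_single, map_single]
      exact Finsupp.single_mem_supported _ _ fun t ↦ hb ⟨t, rfl⟩
    cases b
    exacts [Submodule.mem_sup_right hmem, Submodule.mem_sup_left hmem]

theorem iterate_subdivision_mem_sup {c : SingularChain R X n}
    (hc : c ∈ supportedIn R n U ⊔ supportedIn R n V) (k : ℕ) :
    subdivision^[k] c ∈ supportedIn R n U ⊔ supportedIn R n V := by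
  obtain ⟨a, ha, b, hb, rfl⟩ := Submodule.mem_sup.1 hc
  rw [iterate_map_add]
  exact Submodule.add_mem_sup (iterate_subdivision_mem_supportedIn ha k)
    (iterate_subdivision_mem_supportedIn hb k)

theorem exists_iterate_subdivision_mem_sup (hU : IsOpen U) (hV : IsOpen V)
    {c : SingularChain R X n} (hc : c ∈ supportedIn R n (U ∪ V)) :
    ∃ k, subdivision^[k] c ∈ supportedIn R n U ⊔ supportedIn R n V := by
  rw [supportedIn, Finsupp.supported_eq_span_single] at hc
  induction hc using Submodule.span_induction with
  | mem x hx =>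
    obtain ⟨σ, hσ, rfl⟩ := hx
    exact exists_iterate_subdivision_single_mem_sup hU hV hσ
  | zero => exact ⟨0, Submodule.zero_mem _⟩
  | add x y _ _ hx hy =>
    obtain ⟨k, hk⟩ := hx
    obtain ⟨l, hl⟩ := hy
    refine ⟨k + l, ?_⟩
    rw [iterate_map_add]
    refine Submodule.add_mem _ ?_ ?_
    · rw [add_comm, Function.iterate_add_apply]
      exact iterate_subdivision_mem_sup hk l
    · rw [Function.iterate_add_apply]
      exact iterate_subdivision_mem_sup hl k
  | smul a x _ hx =>
    obtain ⟨k, hk⟩ := hx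
    refine ⟨k, ?_⟩
    rw [← Module.End.pow_apply, map_smul, Module.End.pow_apply]
    exact Submodule.smul_mem _ _ hk

end SingularChain

/-! ### Comparison with the singular chain complex, and homotopy invariance -/

namespace SingularChain

open TopSimplex

section Comparison

variable {R : Type} [CommRing R] {X Y : Type} [TopologicalSpace X] [TopologicalSpace Y]

/-- The singular chain complex whose homology is `SingularHomology`. -/
noncomputable abbrev chainComplex (R : Type) [CommRing R] (X : Type) [TopologicalSpace X] :
    ChainComplex (ModuleCat.{0} R) ℕ :=
  (singularChainComplexFunctor R).obj (TopCat.of X)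

/-- The identification of the chains of degree `m` with the chains on simplices with `m + 1`
vertices. -/
noncomputable def ofChainComplex (R : Type) [CommRing R] (X : Type) [TopologicalSpace X] (m : ℕ) :
    (chainComplex R X).X m ≃ₗ[R] SingularChain R X (m + 1) :=
  Finsupp.domLCongr (TopCat.toSSetObjEquiv (TopCat.of X) _)

/-- A singular simplex, as an element of the singular chain complex. -/
noncomputable def simplexChain (R : Type) [CommRing R] {m : ℕ}
    (s : (TopCat.toSSet.obj (TopCat.of X)).obj (.op (SimplexCategory.mk m))) :
    (chainComplex R X).X m :=
  Finsupp.single s 1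

theorem ofChainComplex_simplexChain {m : ℕ}
    (s : (TopCat.toSSet.obj (TopCat.of X)).obj (.op (SimplexCategory.mk m))) :
    ofChainComplex R X m (simplexChain R s) =
      .single (TopCat.toSSetObjEquiv (TopCat.of X) _ s) 1 :=
  Finsupp.domLCongr_single _ _ _

theorem d_simplexChain {m : ℕ}
    (s : (TopCat.toSSet.obj (TopCat.of X)).obj (.op (SimplexCategory.mk (m + 1)))) :
    (chainComplex R X).d (m + 1) m (simplexChain R s) =
      ∑ i : Fin (m + 2), (-1 : ℤ) ^ (i : ℕ) •
        simplexChain R ((TopCat.toSSet.obj (TopCat.of X)).δ i s) := by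
  have d_eq : (chainComplex R X).d (m + 1) m = ∑ i : Fin (m + 2), (-1 : ℤ) ^ (i : ℕ) •
      (((SimplicialObject.whiskering _ _).obj (ModuleCat.free R)).obj
        (TopCat.toSSet.obj (TopCat.of X))).δ i :=
    AlgebraicTopology.AlternatingFaceMapComplex.obj_d_eq _ _
  have hom_sum_apply (φ : Fin (m + 2) → ((chainComplex R X).X (m + 1) ⟶ (chainComplex R X).X m))
      (c) : (∑ i : Fin (m + 2), (-1 : ℤ) ^ (i : ℕ) • φ i).hom c =
        ∑ i : Fin (m + 2), (-1 : ℤ) ^ (i : ℕ) • (φ i).hom c := by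
    simp [ModuleCat.hom_sum, LinearMap.sum_apply]
  refine (congrArg (fun φ : (chainComplex R X).X (m + 1) ⟶ (chainComplex R X).X m ↦
    φ.hom (simplexChain R s)) d_eq).trans ((hom_sum_apply _ _).trans ?_)
  refine Finset.sum_congr rfl fun i _ ↦ ?_
  exact congrArg (fun y : (chainComplex R X).X m ↦ (-1 : ℤ) ^ (i : ℕ) • y)
    (ModuleCat.free_map_apply (R := R) ((TopCat.toSSet.obj (TopCat.of X)).δ i) s)

theorem ofChainComplex_d {m : ℕ} (c : (chainComplex R X).X (m + 1)) :
    ofChainComplex R X m ((chainComplex R X).d (m + 1) m c) =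
      boundary (ofChainComplex R X (m + 1) c) := by
  refine linearMap_congr_of_single
    (f := (ofChainComplex R X m).toLinearMap ∘ₗ ((chainComplex R X).d (m + 1) m).hom)
    (g := boundary ∘ₗ (ofChainComplex R X (m + 1)).toLinearMap) (fun s ↦ ?_) c
  change ofChainComplex R X m ((chainComplex R X).d (m + 1) m (simplexChain R s)) =
    boundary (ofChainComplex R X (m + 1) (simplexChain R s))
  rw [d_simplexChain, map_sum, ofChainComplex_simplexChain, boundary_single]
  refine Finset.sum_congr rfl fun i _ ↦ ?_
  rw [map_zsmul, ofChainComplex_simplexChain, ← Int.cast_smul_eq_zsmul R, Int.cast_pow,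
    Int.cast_neg, Int.cast_one]
  rfl

theorem ofChainComplex_map (f : C(X, Y)) {m : ℕ} (c : (chainComplex R X).X m) :
    ofChainComplex R Y m (((singularChainComplexFunctor R).map (TopCat.ofHom f)).f m c) =
      map f (ofChainComplex R X m c) := by
  refine linearMap_congr_of_single
    (f := (ofChainComplex R Y m).toLinearMap ∘ₗ
      (((singularChainComplexFunctor R).map (TopCat.ofHom f)).f m).hom)
    (g := map f ∘ₗ (ofChainComplex R X m).toLinearMap) (fun s ↦ ?_) c
  change ofChainComplex R Y m (((singularChainComplexFunctor R).map (TopCat.ofHom f)).f m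
    (simplexChain R s)) = map f (ofChainComplex R X m (simplexChain R s))
  rw [ofChainComplex_simplexChain, map_single]
  refine (congrArg (ofChainComplex R Y m) (ModuleCat.free_map_apply _ s)).trans ?_
  exact ofChainComplex_simplexChain _

theorem exists_d_eq_sub_of_homotopy {K L : ChainComplex (ModuleCat.{0} R) ℕ} {φ ψ : K ⟶ L}
    (h : Homotopy φ ψ) {m : ℕ} {z : K.X m} (hz : K.d m (m - 1) z = 0) :
    ∃ w : L.X (m + 1), L.d (m + 1) m w = φ.f m z - ψ.f m z := by
  refine ⟨h.hom m (m + 1) z, ?_⟩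
  have hcomm : φ.f m = K.d m (m - 1) ≫ h.hom (m - 1) m + h.hom m (m + 1) ≫ L.d (m + 1) m +
      ψ.f m := by
    rw [h.comm m, dNext_nat, prevD_eq _ (j' := m + 1) rfl]
  simp [hcomm, hz]

/-- The chain homotopy of singular chain complexes induced by a homotopy. -/
noncomputable def chainHomotopy (R : Type) [CommRing R] {f g : C(X, Y)} (H : f.Homotopy g) :
    Homotopy ((singularChainComplexFunctor R).map (TopCat.ofHom f))
      ((singularChainComplexFunctor R).map (TopCat.ofHom g)) :=
  ((TopCat.Homotopy.toSSet (f := TopCat.ofHom f) (g := TopCat.ofHom g)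
    H).toSimplicialObjectHomotopy.whiskerRight (ModuleCat.free R)).toChainHomotopy

theorem map_sub_map_mem_range_boundary {f g : C(X, Y)} (H : f.Homotopy g) {n : ℕ}
    {z : SingularChain R X n} (hz : z ∈ cycles R X n) :
    map f z - map g z ∈ LinearMap.range (boundary (R := R) (X := Y) (n := n)) := by
  obtain _ | m := n
  · have hfg : (map f : SingularChain R X 0 →ₗ[R] SingularChain R Y 0) = map g :=
      congrArg (Finsupp.lmapDomain R R)
        (funext fun σ ↦ ContinuousMap.ext fun t ↦ isEmptyElim t)
    rw [hfg, sub_self]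
    exact Submodule.zero_mem _
  set c := (ofChainComplex R X m).symm z with hc
  have hd : (chainComplex R X).d m (m - 1) c = 0 := by
    obtain _ | m := m
    · rw [(chainComplex R X).shape _ _ (by simp)]
      rfl
    · apply (ofChainComplex R X m).injective
      refine (ofChainComplex_d c).trans ?_
      rw [hc, LinearEquiv.apply_symm_apply, map_zero]
      exact hz
  obtain ⟨w, hw⟩ := exists_d_eq_sub_of_homotopy (chainHomotopy R H) hd
  refine ⟨ofChainComplex R Y (m + 1) w, ?_⟩
  rw [← ofChainComplex_d, hw, map_sub, ofChainComplex_map, ofChainComplex_map, hc,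
    LinearEquiv.apply_symm_apply]

theorem subsingleton_singularHomology_iff {m : ℕ} :
    Subsingleton (SingularHomology R (m + 1) X) ↔
      cycles R X (m + 2) ≤ LinearMap.range boundary := by
  have exact_iff : Subsingleton (SingularHomology R (m + 1) X) ↔
      ∀ c : (chainComplex R X).X (m + 1), (chainComplex R X).d (m + 1) m c = 0 →
        ∃ w : (chainComplex R X).X (m + 2), (chainComplex R X).d (m + 2) (m + 1) w = c := by
    rw [← ModuleCat.isZero_iff_subsingleton]
    refine (HomologicalComplex.exactAt_iff_isZero_homology _ _).symm.trans ?_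
    rw [HomologicalComplex.exactAt_iff' _ (m + 2) (m + 1) m (by simp) (by simp),
      ShortComplex.moduleCat_exact_iff]
    rfl
  refine exact_iff.trans <| (ofChainComplex R X (m + 1)).toEquiv.forall_congr fun c ↦
    imp_congr ?_ <| (ofChainComplex R X (m + 2)).toEquiv.exists_congr fun w ↦ ?_
  · rw [← (ofChainComplex R X m).map_eq_zero_iff, ofChainComplex_d]
    rfl
  · rw [← (ofChainComplex R X (m + 1)).injective.eq_iff, ofChainComplex_d]
    rfl

end Comparison

/-! ### Chains of a subspace -/

section Subspace

variable {X : Type*} [TopologicalSpace X] {n : ℕ} {A : Set X}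

/-- The inclusion of a subspace. -/
def inclusion (A : Set X) : C(A, X) :=
  ⟨Subtype.val, continuous_subtype_val⟩

theorem map_inclusion_injective :
    Function.Injective (map (inclusion A) : SingularChain R A n →ₗ[R] SingularChain R X n) :=
  Finsupp.mapDomain_injective fun _ _ h ↦
    ContinuousMap.ext fun t ↦ Subtype.ext (DFunLike.congr_fun h t)

theorem map_inclusion_mem_supportedIn (c : SingularChain R A n) :
    map (inclusion A) c ∈ supportedIn R n A :=
  map_mem_supportedIn (A := Set.univ) (fun x _ ↦ x.2) (supportedIn_univ.ge trivial)

theorem exists_map_inclusion_eq {c : SingularChain R X n} (hc : c ∈ supportedIn R n A) :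
    ∃ c', map (inclusion A) c' = c := by
  change c ∈ LinearMap.range (map (inclusion A))
  refine map_mem_of_mem_supported (f := LinearMap.id) (fun σ hσ ↦ ?_) hc
  exact ⟨.single ⟨fun t ↦ ⟨σ t, hσ t⟩, by fun_prop⟩ 1, map_single _ _ _⟩

theorem mem_cycles_of_map_inclusion_mem {z : SingularChain R A n}
    (hz : map (inclusion A) z ∈ cycles R X n) : z ∈ cycles R A n := by
  cases n with
  | zero => trivial
  | succ n =>
    apply map_inclusion_injective
    rw [map_boundary, map_zero]
    exact hz

theorem map_inclusion_mem_boundariesIn_iff {z : SingularChain R A n} :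
    map (inclusion A) z ∈ boundariesIn R n A ↔ z ∈ LinearMap.range boundary := by
  constructor
  · rintro ⟨c, hc, hcz⟩
    obtain ⟨c, rfl⟩ := exists_map_inclusion_eq hc
    exact ⟨c, map_inclusion_injective ((map_boundary _ _).trans hcz)⟩
  · rintro ⟨c, rfl⟩
    exact ⟨_, map_inclusion_mem_supportedIn c, (map_boundary _ _).symm⟩

end Subspace

theorem map_sub_map_mem_boundariesIn {R : Type} [CommRing R] {X Y : Type} [TopologicalSpace X]
    [TopologicalSpace Y] {f g : C(X, Y)} (H : f.Homotopy g) {A : Set X} {B : Set Y}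
    (hH : ∀ s, ∀ x ∈ A, H (s, x) ∈ B) {n : ℕ} {z : SingularChain R X n}
    (hz : z ∈ cyclesIn R n A) : map f z - map g z ∈ boundariesIn R n B := by
  obtain ⟨hz, hzA⟩ := hz
  obtain ⟨z, rfl⟩ := exists_map_inclusion_eq hzA
  have hf (x : A) : f x ∈ B := H.apply_zero x ▸ hH 0 x x.2
  have hg (x : A) : g x ∈ B := H.apply_one x ▸ hH 1 x x.2
  have H' : (⟨fun x ↦ ⟨f x, hf x⟩, by fun_prop⟩ : C(A, B)).Homotopy
      ⟨fun x ↦ ⟨g x, hg x⟩, by fun_prop⟩ :=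
    { toFun := fun p ↦ ⟨H (p.1, p.2), hH p.1 p.2 p.2.2⟩
      map_zero_left := fun x ↦ Subtype.ext (H.apply_zero _)
      map_one_left := fun x ↦ Subtype.ext (H.apply_one _) }
  have h := map_inclusion_mem_boundariesIn_iff.2
    (map_sub_map_mem_range_boundary H' (mem_cycles_of_map_inclusion_mem hz))
  rw [map_sub, map_map, map_map] at h
  rwa [map_map, map_map]

end SingularChain

/-! ### Acyclic subspaces and the Mayer–Vietoris argument -/

namespace SingularChain

section Point

variable {X : Type*} [TopologicalSpace X] {n : ℕ}

/-- The singular simplex that is constant at `x`, as a chain. -/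
noncomputable def constSimplex (R : Type*) [CommRing R] (n : ℕ) (x : X) : SingularChain R X n :=
  .single (.const _ x) 1

theorem constSimplex_mem_supportedIn {A : Set X} {x : X} (hx : x ∈ A) :
    constSimplex R n x ∈ supportedIn R n A :=
  Finsupp.single_mem_supported _ _ fun _ ↦ hx

theorem boundary_constSimplex (x : X) :
    boundary (constSimplex R (n + 1) x) = if Even n then constSimplex R n x else 0 := by
  have boundary_eq : boundary (constSimplex R (n + 1) x) =
      (∑ i : Fin (n + 1), (-1 : R) ^ (i : ℕ)) • constSimplex R n x := by
    rw [constSimplex, boundary_single, Finset.sum_smul]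
    rfl
  rw [boundary_eq, Fin.sum_univ_eq_sum_range fun i ↦ (-1 : R) ^ i, neg_one_geom_sum]
  by_cases hn : Even n <;> simp [Nat.even_add_one, hn]

theorem exists_map_const_eq_smul {Y : Type*} [TopologicalSpace Y] (c : SingularChain R Y n)
    (x : X) : ∃ r : R, map (.const Y x) c = r • constSimplex R n x := by
  have hmem : map (.const Y x) c ∈ Submodule.span R {constSimplex R n x} := by
    refine map_mem_of_mem_supported (s := Set.univ) (fun σ _ ↦ ?_) (by simp)
    rw [map_single]
    exact Submodule.mem_span_singleton_self _
  obtain ⟨r, hr⟩ := Submodule.mem_span_singleton.1 hmem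
  exact ⟨r, hr.symm⟩

theorem map_const_mem_boundariesIn {Y : Type*} [TopologicalSpace Y] {z : SingularChain R Y n}
    (hz : z ∈ cycles R Y n) {A : Set X} {x : X} (hx : x ∈ A) :
    map (.const Y x) z ∈ boundariesIn R n A := by
  obtain ⟨r, hr⟩ := exists_map_const_eq_smul z x
  rw [hr]
  rcases Nat.even_or_odd n with hn | ⟨m, rfl⟩
  · refine ⟨r • constSimplex R (n + 1) x, Submodule.smul_mem _ _ (constSimplex_mem_supportedIn hx),
      ?_⟩
    rw [map_smul, boundary_constSimplex, if_pos hn]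
  · have hcycle : boundary (r • constSimplex R (2 * m + 1) x) = 0 := hr ▸ map_mem_cycles _ hz
    rw [map_smul, boundary_constSimplex, if_pos (even_two_mul m), constSimplex,
      Finsupp.smul_single, Finsupp.single_eq_zero, smul_eq_mul, mul_one] at hcycle
    rw [hcycle, zero_smul]
    exact Submodule.zero_mem _

end Point

/-- Every `n`-vertex cycle of the subspace `A` bounds in `A`: for nonempty `A` this is the
vanishing of the reduced homology of `A` in degree `n - 1`. -/
def IsAcyclicIn {X : Type*} [TopologicalSpace X] (R : Type*) [CommRing R] (n : ℕ) (A : Set X) :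
    Prop :=
  cyclesIn R n A ≤ boundariesIn R n A

theorem IsAcyclicIn.of_homotopy_const {R : Type} [CommRing R] {X : Type} [TopologicalSpace X]
    {A : Set X} {x : X} (hx : x ∈ A) (H : (ContinuousMap.id X).Homotopy (.const X x))
    (hH : ∀ s, ∀ y ∈ A, H (s, y) ∈ A) (n : ℕ) : IsAcyclicIn R n A := by
  intro z hz
  have h := Submodule.add_mem _ (map_sub_map_mem_boundariesIn H hH hz)
    (map_const_mem_boundariesIn hz.1 hx)
  rwa [sub_add_cancel, map_id] at h

section MayerVietoris

variable {X : Type*} [TopologicalSpace X] {n : ℕ} {U V : Set X}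

theorem exists_mayerVietoris_decomposition (hU : IsOpen U) (hV : IsOpen V)
    {z : SingularChain R X (n + 1)} (hz : z ∈ cyclesIn R (n + 1) (U ∪ V)) :
    ∃ a ∈ supportedIn R (n + 1) U, ∃ b ∈ supportedIn R (n + 1) V,
      boundary b = -boundary a ∧ boundary a ∈ cyclesIn R n (U ∩ V) ∧
        z - (a + b) ∈ boundariesIn R (n + 1) (U ∪ V) := by
  obtain ⟨k, hk⟩ := exists_iterate_subdivision_mem_sup hU hV hz.2
  obtain ⟨a, ha, b, hb, hab⟩ := Submodule.mem_sup.1 hk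
  have hboundary : boundary b = -boundary a := by
    rw [eq_neg_iff_add_eq_zero, ← map_add, add_comm b a, hab]
    exact (iterate_subdivision_mem_cyclesIn hz k).1
  refine ⟨a, ha, b, hb, hboundary, ⟨boundary_mem_cycles a, ?_⟩, ?_⟩
  · rw [supportedIn_inter]
    refine ⟨boundary_mem_supportedIn ha, ?_⟩
    rw [← neg_neg (boundary a), ← hboundary]
    exact Submodule.neg_mem _ (boundary_mem_supportedIn hb)
  · rw [hab]
    exact sub_iterate_subdivision_mem_boundariesIn hz k

/-- With `∂p = r(∂a) - ∂a` in `U ∩ V`, the chains `a + r(b) + p` and `b + r(a) - p` are cycles in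
the acyclic sets `U` and `V`, and their sum is homologous to `z + r(z)`. -/
theorem map_add_self_mem_boundariesIn_of_swap (hU : IsOpen U) (hV : IsOpen V)
    (hU_acyclic : IsAcyclicIn R (n + 1) U) (hV_acyclic : IsAcyclicIn R (n + 1) V)
    {r : C(X, X)} (hUV : Set.MapsTo r U V) (hVU : Set.MapsTo r V U)
    (hr : ∀ w ∈ cyclesIn R n (U ∩ V), map r w - w ∈ boundariesIn R n (U ∩ V))
    {z : SingularChain R X (n + 1)} (hz : z ∈ cyclesIn R (n + 1) (U ∪ V)) :
    map r z + z ∈ boundariesIn R (n + 1) (U ∪ V) := by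
  obtain ⟨a, ha, b, hb, hboundary, hw, hzab⟩ := exists_mayerVietoris_decomposition hU hV hz
  obtain ⟨p, hp, hpw⟩ := hr _ hw
  rw [supportedIn_inter] at hp
  have hU_bounds : a + map r b + p ∈ boundariesIn R (n + 1) U := by
    refine hU_acyclic (mem_cyclesIn_succ.2 ⟨?_, Submodule.add_mem _
      (Submodule.add_mem _ ha (map_mem_supportedIn hVU hb)) hp.1⟩)
    rw [map_add, map_add, ← map_boundary, hboundary, hpw, map_neg]
    abel
  have hV_bounds : b + map r a - p ∈ boundariesIn R (n + 1) V := by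
    refine hV_acyclic (mem_cyclesIn_succ.2 ⟨?_, Submodule.sub_mem _
      (Submodule.add_mem _ hb (map_mem_supportedIn hUV ha)) hp.2⟩)
    rw [map_sub, map_add, ← map_boundary, hboundary, hpw]
    abel
  have hr_union : Set.MapsTo r (U ∪ V) (U ∪ V) := Set.union_comm V U ▸ hUV.union_union hVU
  have hsum := Submodule.add_mem _
    (Submodule.add_mem _ (boundariesIn_mono Set.subset_union_left hU_bounds)
      (boundariesIn_mono Set.subset_union_right hV_bounds))
    (Submodule.add_mem _ (map_mem_boundariesIn hr_union hzab) hzab)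
  convert hsum using 1
  simp only [map_add, map_sub]
  abel

theorem IsAcyclicIn.inter (hU : IsOpen U) (hV : IsOpen V) (hU_acyclic : IsAcyclicIn R n U)
    (hV_acyclic : IsAcyclicIn R n V) (hUV : IsAcyclicIn R (n + 1) (U ∪ V)) :
    IsAcyclicIn R n (U ∩ V) := by
  intro w hw
  obtain ⟨hwc, hwUV⟩ := id hw
  rw [supportedIn_inter] at hwUV
  obtain ⟨a, ha, haw⟩ := hU_acyclic ⟨hwc, hwUV.1⟩
  obtain ⟨b, hb, hbw⟩ := hV_acyclic ⟨hwc, hwUV.2⟩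
  have hab : a - b ∈ cyclesIn R (n + 1) (U ∪ V) := by
    refine mem_cyclesIn_succ.2 ⟨by rw [map_sub, haw, hbw, sub_self], Submodule.sub_mem _
      (supportedIn_mono Set.subset_union_left ha) (supportedIn_mono Set.subset_union_right hb)⟩
  obtain ⟨c, hc, hcab⟩ := hUV hab
  obtain ⟨k, hk⟩ := exists_iterate_subdivision_mem_sup hU hV hc
  obtain ⟨c₁, hc₁, c₂, hc₂, hc₁₂⟩ := Submodule.mem_sup.1 hk
  have heq : subdivision^[k] a - boundary c₁ = subdivision^[k] b + boundary c₂ := by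
    have h : boundary c₁ + boundary c₂ = subdivision^[k] a - subdivision^[k] b := by
      rw [← map_add, hc₁₂, boundary_iterate_subdivision, hcab, iterate_map_sub]
    rw [sub_eq_iff_eq_add, add_assoc, add_comm (boundary c₂), h, add_sub_cancel]
  have hmem : subdivision^[k] a - boundary c₁ ∈ supportedIn R (n + 1) (U ∩ V) := by
    rw [supportedIn_inter]
    refine ⟨Submodule.sub_mem _ (iterate_subdivision_mem_supportedIn ha k)
      (boundary_mem_supportedIn hc₁), ?_⟩
    rw [heq]
    exact Submodule.add_mem _ (iterate_subdivision_mem_supportedIn hb k)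
      (boundary_mem_supportedIn hc₂)
  have hsubdivision : subdivision^[k] w ∈ boundariesIn R n (U ∩ V) := by
    refine ⟨_, hmem, ?_⟩
    rw [map_sub, boundary_boundary, sub_zero, boundary_iterate_subdivision, haw]
  have h := Submodule.add_mem _ (sub_iterate_subdivision_mem_boundariesIn hw k) hsubdivision
  rwa [sub_add_cancel] at h

end MayerVietoris

end SingularChain

/-! ### Punctured vector spaces -/

namespace SingularChain

theorem IsAcyclicIn.of_retract {X Y : Type*} [TopologicalSpace X] [TopologicalSpace Y] {n : ℕ}
    {A : Set X} {B : Set Y} (hB : IsAcyclicIn R n B) {i : C(X, Y)} {r : C(Y, X)}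
    (hi : Set.MapsTo i A B) (hr : Set.MapsTo r B A) (hri : r.comp i = .id X) :
    IsAcyclicIn R n A := by
  intro z hz
  have h := map_mem_boundariesIn hr (hB (map_mem_cyclesIn hi hz))
  rwa [map_map, hri, map_id] at h

theorem not_isAcyclicIn_zero_empty [Nontrivial R] {X : Type*} [TopologicalSpace X] :
    ¬IsAcyclicIn R 0 (∅ : Set X) := by
  intro h
  let emptySimplex : SingularChain R X 0 := .single ⟨isEmptyElim, by fun_prop⟩ 1
  obtain ⟨c, hc, hcz⟩ := h (x := emptySimplex)
    ⟨trivial, Finsupp.single_mem_supported _ _ fun t ↦ isEmptyElim t⟩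
  have hc_zero : c = 0 := by
    have hsupp : {σ : C(TopSimplex 1, X) | ∀ t, σ t ∈ (∅ : Set X)} = ∅ :=
      Set.eq_empty_of_forall_notMem fun σ hσ ↦ hσ (stdSimplex.vertex 0)
    rw [supportedIn, hsupp, Finsupp.supported_empty] at hc
    exact hc
  rw [hc_zero, map_zero] at hcz
  exact Finsupp.single_ne_zero.2 one_ne_zero hcz.symm

variable {R : Type} [CommRing R] {n : ℕ}

theorem IsAcyclicIn.of_starConvex {E : Type} [AddCommGroup E] [Module ℝ E] [TopologicalSpace E]
    [IsTopologicalAddGroup E] [ContinuousSMul ℝ E] {A : Set E} {x : E} (hx : x ∈ A)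
    (hA : StarConvex ℝ x A) : IsAcyclicIn R n A := by
  refine .of_homotopy_const hx (.affine _ _) (fun s y hy ↦ ?_) n
  rw [ContinuousMap.Homotopy.affine_apply]
  refine starConvex_iff_segment_subset.1 hA hy (segment_symm ℝ y x ▸ ?_)
  exact lineMap_mem_segment ℝ y x s.2

variable {E : Type} [NormedAddCommGroup E]

/-- The complement in `ℝ × E` of the closed half-line `{(t, 0) | ε * t ≤ 0}`. -/
def slit (E : Type) [NormedAddCommGroup E] (ε : ℝ) : Set (ℝ × E) :=
  {p | p.2 ≠ 0 ∨ 0 < ε * p.1}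

theorem isOpen_slit (ε : ℝ) : IsOpen (slit E ε) :=
  (isOpen_ne_fun continuous_snd continuous_const).union
    (isOpen_lt continuous_const (continuous_const.mul continuous_fst))

theorem slit_union_slit_neg {ε : ℝ} (hε : ε ≠ 0) : slit E ε ∪ slit E (-ε) = {0}ᶜ := by
  ext ⟨t, v⟩
  by_cases hv : v = 0
  · simp [slit, hv, or_comm, lt_or_lt_iff_ne, hε]
  · simp [slit, hv]

theorem slit_inter_slit_neg (ε : ℝ) : slit E ε ∩ slit E (-ε) = Prod.snd ⁻¹' {0}ᶜ := by
  ext ⟨t, v⟩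
  by_cases hv : v = 0
  · simpa [slit, hv] using fun h : 0 < ε * t ↦ h.le
  · simp [slit, hv]

/-- The reflection of `ℝ × E` in the hyperplane `0 × E`. -/
def reflection (E : Type) [NormedAddCommGroup E] : C(ℝ × E, ℝ × E) :=
  ⟨fun p ↦ (-p.1, p.2), by fun_prop⟩

theorem mapsTo_reflection_slit (ε : ℝ) :
    Set.MapsTo (reflection E) (slit E ε) (slit E (-ε)) := fun p hp ↦
  hp.imp id fun h ↦ (neg_mul_neg ε p.1).symm ▸ h

variable [NormedSpace ℝ E]

theorem starConvex_slit {ε : ℝ} (hε : ε ≠ 0) : StarConvex ℝ (ε, 0) (slit E ε) := by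
  rintro ⟨t, v⟩ h a b ha hb hab
  rcases hb.eq_or_lt with rfl | hb
  · obtain rfl : a = 1 := by simpa using hab
    exact .inr (by simpa using hε)
  · refine h.imp (fun hv ↦ ?_) fun ht ↦ ?_
    · simpa using ⟨hb.ne', hv⟩
    · change 0 < ε * (a * ε + b * t)
      calc 0 < a * (ε * ε) + b * (ε * t) :=
            add_pos_of_nonneg_of_pos (mul_nonneg ha (mul_self_nonneg ε)) (mul_pos hb ht)
        _ = ε * (a * ε + b * t) := by ring

theorem isAcyclicIn_slit {ε : ℝ} (hε : ε ≠ 0) : IsAcyclicIn R n (slit E ε) :=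
  .of_starConvex (Or.inr (mul_self_pos.2 hε)) (starConvex_slit hε)

theorem map_reflection_add_self_mem_boundariesIn {z : SingularChain R (ℝ × E) (n + 1)}
    (hz : z ∈ cyclesIn R (n + 1) {0}ᶜ) :
    map (reflection E) z + z ∈ boundariesIn R (n + 1) {0}ᶜ := by
  rw [← slit_union_slit_neg one_ne_zero] at hz ⊢
  refine map_add_self_mem_boundariesIn_of_swap (isOpen_slit _) (isOpen_slit _)
    (isAcyclicIn_slit one_ne_zero) (isAcyclicIn_slit (neg_ne_zero.2 one_ne_zero))
    (mapsTo_reflection_slit 1) (fun p hp ↦ neg_neg (1 : ℝ) ▸ mapsTo_reflection_slit (-1) hp)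
    (fun w hw ↦ ?_) hz
  have h := map_sub_map_mem_boundariesIn (.affine (reflection E) (.id _))
    (B := slit E 1 ∩ slit E (-1)) (fun s p hp ↦ ?_) hw
  · rwa [map_id] at h
  · rw [slit_inter_slit_neg] at hp ⊢
    change (AffineMap.lineMap (-p.1, p.2) p (s : ℝ) : ℝ × E).2 ≠ 0
    simpa [AffineMap.lineMap_apply] using hp

theorem not_isAcyclicIn_compl_zero_prod (h : ¬IsAcyclicIn R n ({0}ᶜ : Set E)) :
    ¬IsAcyclicIn R (n + 1) ({0}ᶜ : Set (ℝ × E)) := by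
  rw [← slit_union_slit_neg one_ne_zero]
  refine fun hunion ↦ h (IsAcyclicIn.of_retract (B := Prod.snd ⁻¹' {0}ᶜ)
    (i := ⟨fun v ↦ ((0 : ℝ), v), by fun_prop⟩) (r := .snd) ?_ (fun _ hv ↦ hv) (fun _ hp ↦ hp) rfl)
  rw [← slit_inter_slit_neg 1]
  exact .inter (isOpen_slit _) (isOpen_slit _) (isAcyclicIn_slit one_ne_zero)
    (isAcyclicIn_slit (neg_ne_zero.2 one_ne_zero)) hunion

theorem mapsTo_compl_zero {F : Type*} [NormedAddCommGroup F] [NormedSpace ℝ F] (e : E ≃L[ℝ] F) :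
    Set.MapsTo e {0}ᶜ {0}ᶜ := fun _ hx ↦
  (map_ne_zero_iff e e.injective).2 hx

theorem not_isAcyclicIn_compl_zero [Nontrivial R] [FiniteDimensional ℝ E]
    (hn : Module.finrank ℝ E = n) : ¬IsAcyclicIn R n ({0}ᶜ : Set E) := by
  induction n generalizing E with
  | zero =>
    have := Module.finrank_zero_iff.1 hn
    have hE : ({0}ᶜ : Set E) = ∅ :=
      Set.eq_empty_of_forall_notMem fun x hx ↦ hx (Subsingleton.elim x 0)
    rw [hE]
    exact not_isAcyclicIn_zero_empty
  | succ n ih =>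
    have e : E ≃L[ℝ] ℝ × (Fin n → ℝ) :=
      .ofFinrankEq (by simp [hn, add_comm])
    refine fun h ↦ not_isAcyclicIn_compl_zero_prod (ih (Module.finrank_fin_fun ℝ))
      (h.of_retract (i := ⟨e.symm, e.symm.continuous⟩) (r := ⟨e, e.continuous⟩)
        (mapsTo_compl_zero e.symm) (mapsTo_compl_zero e) ?_)
    exact ContinuousMap.ext e.apply_symm_apply

/-- The antipodal map. -/
def antipode (E : Type*) [NormedAddCommGroup E] : C(E, E) :=
  ⟨fun x ↦ -x, continuous_neg⟩

/-- Rotation of the complex factor connects the antipodal map to the reflection. -/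
noncomputable def antipodeHomotopyReflection (F : Type) [NormedAddCommGroup F] [NormedSpace ℂ F] :
    (antipode (ℝ × F)).Homotopy (reflection F) where
  toFun p := (-p.2.1, Complex.exp (Real.pi * (1 - p.1 : ℝ) * Complex.I) • p.2.2)
  map_zero_left p := by simp [antipode, Complex.exp_pi_mul_I, ← Prod.neg_mk]
  map_one_left p := by simp [reflection]

theorem map_antipode_prod_add_self_mem_boundariesIn {F : Type} [NormedAddCommGroup F]
    [NormedSpace ℂ F] {z : SingularChain R (ℝ × F) (n + 1)} (hz : z ∈ cyclesIn R (n + 1) {0}ᶜ) :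
    map (antipode (ℝ × F)) z + z ∈ boundariesIn R (n + 1) {0}ᶜ := by
  let _ : NormedSpace ℝ F := .restrictScalars ℝ ℂ F
  have h := Submodule.add_mem _ (map_sub_map_mem_boundariesIn (antipodeHomotopyReflection F)
    (B := {0}ᶜ) (fun s p hp ↦ ?_) hz) (map_reflection_add_self_mem_boundariesIn hz)
  · rwa [← add_assoc, sub_add_cancel] at h
  · change (-p.1, Complex.exp (Real.pi * (1 - s : ℝ) * Complex.I) • p.2) ≠ 0
    simpa [Prod.ext_iff] using hp

theorem map_antipode_add_self_mem_boundariesIn [FiniteDimensional ℝ E]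
    (hE : Odd (Module.finrank ℝ E)) {z : SingularChain R E (n + 1)}
    (hz : z ∈ cyclesIn R (n + 1) {0}ᶜ) :
    map (antipode E) z + z ∈ boundariesIn R (n + 1) {0}ᶜ := by
  obtain ⟨d, hd⟩ := hE
  have e : E ≃L[ℝ] ℝ × (Fin d → ℂ) :=
    .ofFinrankEq (by simp [hd, Module.finrank_pi_fintype, Complex.finrank_real_complex]; ring)
  set f : C(E, ℝ × (Fin d → ℂ)) := ⟨e, e.continuous⟩
  set g : C(ℝ × (Fin d → ℂ), E) := ⟨e.symm, e.symm.continuous⟩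
  have hgf : g.comp f = .id E := ContinuousMap.ext e.symm_apply_apply
  have hneg : (g.comp (antipode _)).comp f = antipode E := by
    ext x
    simp [f, g, antipode]
  have h := map_mem_boundariesIn (f := g) (mapsTo_compl_zero e.symm)
    (map_antipode_prod_add_self_mem_boundariesIn
      (map_mem_cyclesIn (f := f) (mapsTo_compl_zero e) hz))
  rwa [map_add, map_map, map_map, map_map, hgf, hneg, map_id] at h

end SingularChain

/-! ### Spheres -/

namespace SingularChain

section Sphere

open Metric

variable {E : Type} [NormedAddCommGroup E]

theorem sphere_subset_compl_zero : sphere (0 : E) 1 ⊆ {0}ᶜ := fun x hx ↦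
  ne_zero_of_mem_unit_sphere ⟨x, hx⟩

variable [NormedSpace ℝ E]

/-- The radial retraction of the punctured space onto the unit sphere. -/
noncomputable def normalize (E : Type) [NormedAddCommGroup E] [NormedSpace ℝ E] :
    C(({0}ᶜ : Set E), sphere (0 : E) 1) :=
  ⟨fun x ↦ (homeomorphUnitSphereProd E x).1, by fun_prop⟩

theorem coe_normalize (x : ({0}ᶜ : Set E)) :
    (normalize E x : E) = ‖(x : E)‖⁻¹ • (x : E) :=
  homeomorphUnitSphereProd_apply_fst_coe E x

theorem normalize_of_mem_sphere {x : E} (hx : x ∈ sphere 0 1) :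
    normalize E ⟨x, sphere_subset_compl_zero hx⟩ = ⟨x, hx⟩ :=
  Subtype.ext <| by simp [coe_normalize, mem_sphere_zero_iff_norm.1 hx]

/-- The antipodal map of the unit sphere. -/
def sphereAntipode (E : Type) [NormedAddCommGroup E] : C(sphere (0 : E) 1, sphere (0 : E) 1) :=
  ⟨fun x ↦ -x, continuous_neg⟩

variable {R : Type} [CommRing R] {n : ℕ}

theorem mem_range_boundary_of_map_inclusion_sphere_mem
    {w : SingularChain R (sphere (0 : E) 1) n}
    (hw : map (inclusion (sphere (0 : E) 1)) w ∈ boundariesIn R n {0}ᶜ) :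
    w ∈ LinearMap.range boundary := by
  set j : C(sphere (0 : E) 1, ({0}ᶜ : Set E)) :=
    ⟨Set.inclusion sphere_subset_compl_zero, continuous_inclusion _⟩
  have hj : map j w ∈ LinearMap.range boundary := by
    rwa [← map_inclusion_mem_boundariesIn_iff, map_map]
  have hretract : (normalize E).comp j = .id _ :=
    ContinuousMap.ext fun x ↦ normalize_of_mem_sphere x.2
  have h := map_mem_range_boundary (normalize E) hj
  rwa [map_map, hretract, map_id] at h

theorem map_inclusion_sub_map_normalize_mem_boundariesIn
    {z : SingularChain R ({0}ᶜ : Set E) n} (hz : z ∈ cycles R _ n) :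
    map (inclusion {0}ᶜ) z - map ((inclusion (sphere (0 : E) 1)).comp (normalize E)) z ∈
      boundariesIn R n {0}ᶜ := by
  refine map_sub_map_mem_boundariesIn (A := Set.univ)
    (.affine (inclusion {0}ᶜ) ((inclusion _).comp (normalize E))) (fun s x _ ↦ ?_)
    ⟨hz, supportedIn_univ.ge trivial⟩
  have hx : (x : E) ≠ 0 := x.2
  have hpos : 0 < (1 - s : ℝ) + s * ‖(x : E)‖⁻¹ := by
    have hs : (s : ℝ) ≤ 1 := s.2.2
    rcases s.2.1.eq_or_lt with h0 | h0
    · simp [← h0]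
    · have : 0 < (s : ℝ) * ‖(x : E)‖⁻¹ := by positivity
      linarith
  have hline : AffineMap.lineMap (x : E) (normalize E x : E) (s : ℝ) =
      ((1 - s : ℝ) + s * ‖(x : E)‖⁻¹) • (x : E) := by
    rw [AffineMap.lineMap_apply_module, coe_normalize, smul_smul, add_smul]
  change AffineMap.lineMap (x : E) (normalize E x : E) (s : ℝ) ≠ 0
  rw [hline]
  exact smul_ne_zero hpos.ne' hx

theorem not_cycles_sphere_le_range_boundary [Nontrivial R] [FiniteDimensional ℝ E]
    (hn : Module.finrank ℝ E = n) :
    ¬cycles R (sphere (0 : E) 1) n ≤ LinearMap.range boundary := by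
  refine fun hle ↦ not_isAcyclicIn_compl_zero (R := R) hn ?_
  rintro z ⟨hz, hzA⟩
  obtain ⟨z, rfl⟩ := exists_map_inclusion_eq hzA
  have hz := mem_cycles_of_map_inclusion_mem hz
  have hnormalize := boundariesIn_mono sphere_subset_compl_zero <|
    map_inclusion_mem_boundariesIn_iff.2 (hle (map_mem_cycles (normalize E) hz))
  rw [map_map] at hnormalize
  exact (Submodule.sub_mem_iff_left _ hnormalize).1
    (map_inclusion_sub_map_normalize_mem_boundariesIn hz)

theorem map_sphereAntipode_add_self_mem_range_boundary [FiniteDimensional ℝ E]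
    (hE : Odd (Module.finrank ℝ E)) {z : SingularChain R (sphere (0 : E) 1) (n + 1)}
    (hz : z ∈ cycles R _ (n + 1)) :
    map (sphereAntipode E) z + z ∈ LinearMap.range boundary := by
  apply mem_range_boundary_of_map_inclusion_sphere_mem
  have hcycle : map (inclusion (sphere (0 : E) 1)) z ∈ cyclesIn R (n + 1) {0}ᶜ :=
    ⟨map_mem_cycles _ hz,
      supportedIn_mono sphere_subset_compl_zero (map_inclusion_mem_supportedIn z)⟩
  have h := map_antipode_add_self_mem_boundariesIn hE hcycle
  rwa [map_map, show (antipode E).comp (inclusion _) = (inclusion _).comp (sphereAntipode E) from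
    rfl, ← map_map, ← map_add] at h

end Sphere

end SingularChain

/-! ### The transfer of a finite quotient covering -/

namespace SingularChain

section Transfer

open TopSimplex

variable {X Y G : Type*} [TopologicalSpace X] [TopologicalSpace Y] {n : ℕ} {p : C(X, Y)}

instance : ContractibleSpace (TopSimplex (n + 1)) :=
  (convex_stdSimplex ℝ _).contractibleSpace ⟨_, (stdSimplex.vertex 0).2⟩

instance : LocallyPathConnectedSpace (TopSimplex n) :=
  (convex_stdSimplex ℝ _).locallyPathConnectedSpace

theorem exists_comp_eq_of_isCoveringMap (hp : IsCoveringMap p) (hsurj : Function.Surjective p)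
    (σ : C(TopSimplex (n + 1), Y)) : ∃ τ : C(TopSimplex (n + 1), X), p.comp τ = σ := by
  obtain ⟨x, hx⟩ := hsurj (σ (stdSimplex.vertex 0))
  obtain ⟨τ, ⟨_, hτ⟩, _⟩ := hp.existsUnique_continuousMap_lifts σ _ x hx
  exact ⟨τ, ContinuousMap.ext (congrFun hτ)⟩

variable [Group G] [MulAction G X] [ContinuousConstSMul G X]

theorem comp_smul_of_isQuotientCoveringMap (hp : IsQuotientCoveringMap p G) (g : G)
    (τ : C(TopSimplex n, X)) : p.comp (g • τ) = p.comp τ :=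
  ContinuousMap.ext fun _ ↦ hp.map_smul g

theorem exists_smul_eq_of_comp_eq (hp : IsQuotientCoveringMap p G)
    {τ τ' : C(TopSimplex (n + 1), X)} (h : p.comp τ = p.comp τ') : ∃ g : G, g • τ' = τ := by
  let v : TopSimplex (n + 1) := stdSimplex.vertex 0
  obtain ⟨g, hg⟩ := hp.apply_eq_iff_mem_orbit.1 (DFunLike.congr_fun h v)
  have hcomp : p.comp (g • τ') = p.comp τ :=
    (comp_smul_of_isQuotientCoveringMap hp g τ').trans h.symm
  refine ⟨g, DFunLike.coe_injective ?_⟩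
  exact hp.isCoveringMap.eq_of_comp_eq (map_continuous _) (map_continuous _)
    (congrArg DFunLike.coe hcomp) v hg

/-- The transfer of a quotient covering by a finite group: a simplex is sent to the sum of all its
lifts, enumerated by the translates of a chosen one. -/
noncomputable def transfer [Fintype G] (hp : IsQuotientCoveringMap p G) :
    SingularChain R Y (n + 1) →ₗ[R] SingularChain R X (n + 1) :=
  Finsupp.linearCombination R fun σ ↦ ∑ g : G,
    .single (g • (exists_comp_eq_of_isCoveringMap hp.isCoveringMap hp.surjective σ).choose) 1

variable [Fintype G] (hp : IsQuotientCoveringMap p G)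

theorem transfer_single_comp (τ : C(TopSimplex (n + 1), X)) :
    transfer hp (.single (p.comp τ) (1 : R)) = ∑ g : G, .single (g • τ) 1 := by
  have hlift := exists_comp_eq_of_isCoveringMap hp.isCoveringMap hp.surjective (p.comp τ)
  obtain ⟨h, hh⟩ := exists_smul_eq_of_comp_eq hp hlift.choose_spec
  rw [transfer, Finsupp.linearCombination_single, one_smul, ← hh]
  exact Fintype.sum_equiv (Equiv.mulRight h) _ _ fun g ↦ by rw [smul_smul, Equiv.coe_mulRight]

theorem boundary_transfer (c : SingularChain R Y (n + 2)) :
    boundary (transfer hp c) = transfer hp (boundary c) := by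
  refine linearMap_congr_of_single (f := boundary ∘ₗ transfer hp) (g := transfer hp ∘ₗ boundary)
    (fun σ ↦ ?_) c
  obtain ⟨τ, rfl⟩ := exists_comp_eq_of_isCoveringMap hp.isCoveringMap hp.surjective σ
  have hface (i : Fin (n + 2)) : transfer hp (.single ((p.comp τ).comp (face i)) (1 : R)) =
      ∑ g : G, .single ((g • τ).comp (face i)) 1 :=
    transfer_single_comp hp (τ.comp (face i))
  simp only [LinearMap.comp_apply, transfer_single_comp, map_sum, boundary_single, map_smul, hface,
    Finset.smul_sum]
  exact Finset.sum_comm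

theorem transfer_mem_cycles {z : SingularChain R Y (n + 2)} (hz : z ∈ cycles R Y (n + 2)) :
    transfer hp z ∈ cycles R X (n + 2) := by
  change boundary z = 0 at hz
  change boundary (transfer hp z) = 0
  rw [boundary_transfer, hz, map_zero]

theorem map_transfer (c : SingularChain R Y (n + 1)) :
    map p (transfer hp c) = (Fintype.card G : R) • c := by
  refine linearMap_congr_of_single (f := map p ∘ₗ transfer hp)
    (g := (Fintype.card G : R) • .id) (fun σ ↦ ?_) c
  obtain ⟨τ, rfl⟩ := exists_comp_eq_of_isCoveringMap hp.isCoveringMap hp.surjective σ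
  simp [transfer_single_comp, map_single, comp_smul_of_isQuotientCoveringMap hp]

end Transfer

end SingularChain

/-! ### Configuration spaces -/

/-- The ordered configuration space `F_k(M)`. -/
abbrev OrdConfigSpace (M : Type) (k : ℕ) : Type :=
  {f : Fin k → M // Function.Injective f}

namespace OrdConfigSpace

variable {M : Type} {k : ℕ}

instance : MulAction (Equiv.Perm (Fin k)) (OrdConfigSpace M k) where
  smul σ f := ⟨f.1 ∘ ⇑σ⁻¹, f.2.comp σ⁻¹.injective⟩
  one_smul _ := rfl
  mul_smul σ τ f := Subtype.ext <| by
    change f.1 ∘ ⇑(σ * τ)⁻¹ = (f.1 ∘ ⇑τ⁻¹) ∘ ⇑σ⁻¹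
    rw [mul_inv_rev, Equiv.Perm.coe_mul, Function.comp_assoc]

theorem apply_zero_ne_apply_one (f : OrdConfigSpace M 2) : f.1 0 ≠ f.1 1 :=
  f.2.ne zero_ne_one

/-- The ordered configuration of two distinct points. -/
def pair {x y : M} (h : x ≠ y) : OrdConfigSpace M 2 :=
  ⟨![x, y], injective_pair_iff_ne.2 h⟩

variable [TopologicalSpace M]

/-- The `i`-th point of a configuration. -/
def point (i : Fin k) : C(OrdConfigSpace M k, M) :=
  ⟨fun f ↦ f.1 i, (continuous_apply i).comp continuous_subtype_val⟩

instance : ContinuousConstSMul (Equiv.Perm (Fin k)) (OrdConfigSpace M k) where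
  continuous_const_smul σ :=
    (continuous_pi fun i ↦ map_continuous (point (σ⁻¹ i))).subtype_mk _

theorem continuous_pair {X : Type*} [TopologicalSpace X] {f g : X → M} (hf : Continuous f)
    (hg : Continuous g) (h : ∀ x, f x ≠ g x) : Continuous fun x ↦ pair (h x) :=
  (continuous_pi <| Fin.forall_fin_two.2 ⟨hf, hg⟩).subtype_mk _

/-- The quotient map `F_k(M) → C_k(M)`. -/
def toUnord (M : Type) [TopologicalSpace M] (k : ℕ) :
    C(OrdConfigSpace M k, UnordConfigSpace M k) :=
  ⟨Quotient.mk (configSetoid M k), continuous_quotient_mk'⟩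

theorem toUnord_eq_iff_mem_orbit {f g : OrdConfigSpace M k} :
    toUnord M k f = toUnord M k g ↔ f ∈ MulAction.orbit (Equiv.Perm (Fin k)) g := by
  refine (Quotient.eq (r := configSetoid M k)).trans (exists_congr fun σ ↦ ?_)
  rw [Subtype.ext_iff]
  change f.1 ∘ σ = g.1 ↔ g.1 ∘ ⇑σ⁻¹ = f.1
  rw [Equiv.Perm.inv_def, Equiv.comp_symm_eq, eq_comm]

theorem exists_nhds_smul_disjoint [T2Space M] (f : OrdConfigSpace M k) :
    ∃ U ∈ nhds f, ∀ σ : Equiv.Perm (Fin k), ((σ • ·) '' U ∩ U).Nonempty → σ = 1 := by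
  obtain ⟨U, hU, hdisjoint⟩ := (Set.finite_range f.1).t2_separation
  refine ⟨{h | ∀ i, h.1 i ∈ U (f.1 i)}, IsOpen.mem_nhds ?_ fun i ↦ (hU _).1, ?_⟩
  · rw [Set.ofPred_forall]
    exact isOpen_iInter_of_finite fun i ↦ (hU _).2.preimage (map_continuous (point i))
  · rintro σ ⟨_, ⟨h, hh, rfl⟩, hσh⟩
    refine inv_eq_one.1 (Equiv.ext fun i ↦ f.2 ?_)
    by_contra hne
    exact Set.disjoint_left.1 (hdisjoint (Set.mem_range_self _) (Set.mem_range_self _) hne)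
      (hh (σ⁻¹ i)) (hσh i)

theorem isQuotientCoveringMap_toUnord (M : Type) [TopologicalSpace M] [T2Space M] (k : ℕ) :
    IsQuotientCoveringMap (toUnord M k) (Equiv.Perm (Fin k)) where
  __ : Topology.IsQuotientMap (toUnord M k) := isQuotientMap_quotient_mk'
  continuous_const_smul := continuous_const_smul
  apply_eq_iff_mem_orbit := toUnord_eq_iff_mem_orbit
  disjoint := exists_nhds_smul_disjoint

end OrdConfigSpace

namespace OrdConfigSpace

open Metric SingularChain

variable {E : Type} [NormedAddCommGroup E] [NormedSpace ℝ E]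

theorem lineMap_neg_ne_smul {x y : E} (hx : ‖x‖ = 1) (hy : ‖y‖ = 1) (hxy : x ≠ y) {s c : ℝ}
    (hs : s ∈ Set.Icc (0 : ℝ) 1) (hc : 0 ≤ c) : AffineMap.lineMap y (-x) s ≠ c • x := by
  intro h
  have heq : (1 - s) • y = (s + c) • x := by
    rw [AffineMap.lineMap_apply_module] at h
    rw [add_smul, ← h]
    module
  have hcoeff : 1 - s = s + c := by
    have hnorm := congrArg norm heq
    rwa [norm_smul, norm_smul, hx, hy, Real.norm_of_nonneg (sub_nonneg.2 hs.2),
      Real.norm_of_nonneg (add_nonneg hs.1 hc), mul_one, mul_one] at hnorm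
  have hne : s + c ≠ 0 := fun h0 ↦ by linarith
  rw [hcoeff] at heq
  exact hxy (smul_right_injective E hne heq).symm

theorem lineMap_neg_apply_ne_smul (f : OrdConfigSpace (sphere (0 : E) 1) 2) (s : unitInterval)
    {c : ℝ} (hc : 0 ≤ c) :
    AffineMap.lineMap (f.1 1 : E) (-(f.1 0 : E)) (s : ℝ) ≠ c • (f.1 0 : E) :=
  lineMap_neg_ne_smul (norm_eq_of_mem_sphere _) (norm_eq_of_mem_sphere _)
    (Subtype.coe_injective.ne f.apply_zero_ne_apply_one) s.2 hc

theorem lineMap_neg_apply_ne_zero (s : unitInterval) (f : OrdConfigSpace (sphere (0 : E) 1) 2) :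
    AffineMap.lineMap (f.1 1 : E) (-(f.1 0 : E)) (s : ℝ) ≠ 0 := by
  simpa using lineMap_neg_apply_ne_smul f s le_rfl

/-- The second point of a two-point configuration on the sphere, moved for time `s` along the
radial projection of the segment that leads to the antipode of the first point. -/
noncomputable def repelled (s : unitInterval) (f : OrdConfigSpace (sphere (0 : E) 1) 2) :
    sphere (0 : E) 1 :=
  normalize E ⟨_, lineMap_neg_apply_ne_zero s f⟩

theorem repelled_zero (f : OrdConfigSpace (sphere (0 : E) 1) 2) : repelled 0 f = f.1 1 := by
  simp only [repelled, Set.Icc.coe_zero, AffineMap.lineMap_apply_zero]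
  exact normalize_of_mem_sphere (f.1 1).2

theorem repelled_one (f : OrdConfigSpace (sphere (0 : E) 1) 2) : repelled 1 f = -f.1 0 := by
  simp only [repelled, Set.Icc.coe_one, AffineMap.lineMap_apply_one]
  exact normalize_of_mem_sphere (-f.1 0).2

theorem apply_zero_ne_repelled (s : unitInterval) (f : OrdConfigSpace (sphere (0 : E) 1) 2) :
    f.1 0 ≠ repelled s f := by
  intro h
  have hcoe := (congrArg Subtype.val h).trans (coe_normalize _)
  have hnorm := norm_ne_zero_iff.2 (lineMap_neg_apply_ne_zero s f)
  exact lineMap_neg_apply_ne_smul f s (norm_nonneg _) ((eq_inv_smul_iff₀ hnorm).1 hcoe).symm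

theorem continuous_repelled : Continuous
    fun p : unitInterval × OrdConfigSpace (sphere (0 : E) 1) 2 ↦ repelled p.1 p.2 := by
  have hcoe (i : Fin 2) : Continuous
      fun p : unitInterval × OrdConfigSpace (sphere (0 : E) 1) 2 ↦ (p.2.1 i : E) :=
    continuous_subtype_val.comp ((map_continuous (point i)).comp continuous_snd)
  refine (map_continuous (normalize E)).comp (Continuous.subtype_mk ?_ _)
  simp only [AffineMap.lineMap_apply_module]
  fun_prop

/-- The configuration of a point of the sphere and its antipode. -/
def antipodalPair (E : Type) [NormedAddCommGroup E] [NormedSpace ℝ E] :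
    C(sphere (0 : E) 1, OrdConfigSpace (sphere (0 : E) 1) 2) :=
  ⟨fun x ↦ pair (ne_neg_of_mem_unit_sphere ℝ x),
    continuous_pair continuous_id continuous_neg _⟩

/-- Pushing the second point to the antipode of the first deforms `F_2(S)` onto the antipodal
pairs. -/
noncomputable def homotopyAntipodalPair (E : Type) [NormedAddCommGroup E] [NormedSpace ℝ E] :
    (ContinuousMap.id (OrdConfigSpace (sphere (0 : E) 1) 2)).Homotopy
      ((antipodalPair E).comp (point 0)) where
  toFun p := pair (apply_zero_ne_repelled p.1 p.2)
  continuous_toFun := continuous_pair ((map_continuous (point 0)).comp continuous_snd)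
    continuous_repelled _
  map_zero_left f := Subtype.ext <| funext <| Fin.forall_fin_two.2 ⟨rfl, repelled_zero f⟩
  map_one_left f := Subtype.ext <| funext <| Fin.forall_fin_two.2 ⟨rfl, repelled_one f⟩

theorem toUnord_comp_antipodalPair_comp_sphereAntipode :
    ((toUnord _ 2).comp (antipodalPair E)).comp (sphereAntipode E) =
      (toUnord _ 2).comp (antipodalPair E) := by
  ext x
  refine toUnord_eq_iff_mem_orbit.2 ⟨Equiv.swap 0 1, Subtype.ext ?_⟩
  exact funext <| Fin.forall_fin_two.2 ⟨rfl, (neg_neg x).symm⟩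

end OrdConfigSpace

namespace SingularChain

section Homology

open Metric OrdConfigSpace

theorem cycles_le_range_boundary_of_unordConfigSpace_one {M : Type} [TopologicalSpace M] {n : ℕ}
    (h : cycles R (UnordConfigSpace M 1) n ≤ LinearMap.range boundary) :
    cycles R M n ≤ LinearMap.range boundary := by
  let singleton : C(M, OrdConfigSpace M 1) :=
    ⟨fun x ↦ ⟨fun _ ↦ x, Function.injective_of_subsingleton _⟩, by fun_prop⟩
  let onlyPoint : C(UnordConfigSpace M 1, M) :=
    ⟨Quotient.lift (s := configSetoid M 1) (point 0) fun f g ⟨σ, hσ⟩ ↦ by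
      change f.1 0 = g.1 0
      rw [← hσ, Function.comp_apply, Subsingleton.elim (σ 0) 0],
    (map_continuous (point 0)).quotient_lift _⟩
  exact cycles_le_range_boundary_of_retract (i := (toUnord M 1).comp singleton) (r := onlyPoint)
    rfl h

variable {R : Type} [CommRing R] {E : Type} [NormedAddCommGroup E] [NormedSpace ℝ E]
  [FiniteDimensional ℝ E] {m : ℕ}

theorem nontrivial_singularHomology_unordConfigSpace_sphere_one [Nontrivial R]
    (hE : Module.finrank ℝ E = m + 2) :
    Nontrivial (SingularHomology R (m + 1) (UnordConfigSpace (sphere (0 : E) 1) 1)) := by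
  rw [← not_subsingleton_iff_nontrivial, subsingleton_singularHomology_iff]
  exact fun h ↦ not_cycles_sphere_le_range_boundary hE
    (cycles_le_range_boundary_of_unordConfigSpace_one h)

theorem two_smul_map_toUnord_mem_range_boundary (hE : Odd (Module.finrank ℝ E))
    {z : SingularChain R (OrdConfigSpace (sphere (0 : E) 1) 2) (m + 1)}
    (hz : z ∈ cycles R _ (m + 1)) :
    (2 : R) • map (toUnord _ 2) z ∈ LinearMap.range boundary := by
  have hdeform := map_mem_range_boundary (toUnord _ 2)
    (map_sub_map_mem_range_boundary (homotopyAntipodalPair E) hz)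
  have hantipode := map_mem_range_boundary ((toUnord _ 2).comp (antipodalPair E))
    (map_sphereAntipode_add_self_mem_range_boundary hE (map_mem_cycles (point 0) hz))
  rw [map_add, map_map, toUnord_comp_antipodalPair_comp_sphereAntipode, ← two_smul R] at hantipode
  rw [map_sub, map_id, ← map_map (antipodalPair E), map_map (toUnord _ 2)] at hdeform
  have h := Submodule.add_mem _ (Submodule.smul_mem _ 2 hdeform) hantipode
  rwa [smul_sub, sub_add_cancel] at h

theorem subsingleton_singularHomology_unordConfigSpace_sphere_two (h2 : IsUnit (2 : R))
    (hE : Odd (Module.finrank ℝ E)) :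
    Subsingleton (SingularHomology R (m + 1) (UnordConfigSpace (sphere (0 : E) 1) 2)) := by
  rw [subsingleton_singularHomology_iff]
  intro z hz
  have hcover := isQuotientCoveringMap_toUnord (sphere (0 : E) 1) 2
  have h := two_smul_map_toUnord_mem_range_boundary hE (transfer_mem_cycles hcover hz)
  have hcard : (Fintype.card (Equiv.Perm (Fin 2)) : R) = 2 := by simp [Fintype.card_perm]
  rw [map_transfer, hcard] at h
  rwa [Submodule.smul_mem_iff_of_isUnit _ h2, Submodule.smul_mem_iff_of_isUnit _ h2] at h

end Homology

end SingularChain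

open SingularChain in
theorem homology_of_configuration_spaces_of_even_sphere_not_monotone_general
    (K : Type) [Field K] (h2 : (2 : K) ≠ 0) {E : Type} [NormedAddCommGroup E] [NormedSpace ℝ E]
    (d : ℕ) (hd : 1 ≤ d) (hE : Module.finrank ℝ E = 2 * d + 1) :
    ∃ k : ℕ, 1 ≤ k ∧
      Module.rank K (SingularHomology K (2 * d)
        (UnordConfigSpace (Metric.sphere (0 : E) 1) (k + 1))) <
      Module.rank K (SingularHomology K (2 * d)
        (UnordConfigSpace (Metric.sphere (0 : E) 1) k)) := by
  have : FiniteDimensional ℝ E := .of_finrank_eq_succ hE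
  have hodd : Odd (Module.finrank ℝ E) := ⟨d, hE⟩
  obtain ⟨m, hm⟩ : ∃ m, 2 * d = m + 1 := ⟨2 * d - 1, by lia⟩
  rw [hm] at hE ⊢
  have htwo := subsingleton_singularHomology_unordConfigSpace_sphere_two (m := m) h2.isUnit hodd
  have hone := nontrivial_singularHomology_unordConfigSpace_sphere_one (R := K) hE
  refine ⟨1, le_rfl, ?_⟩
  rw [rank_subsingleton']
  exact rank_pos_iff_nontrivial.2 hone

/-- For every `d ≥ 1`, the function `k ↦ dim_ℚ H_{2d}(C_k(S^{2d}); ℚ)` is not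
monotonically increasing: there exists `k ≥ 1` with
`dim_ℚ H_{2d}(C_k(S^{2d}); ℚ) > dim_ℚ H_{2d}(C_{k+1}(S^{2d}); ℚ)`. -/
theorem homology_of_configuration_spaces_of_even_sphere_not_monotone
    (d : ℕ) (hd : 1 ≤ d) :
    ∃ k : ℕ, 1 ≤ k ∧
      Module.rank ℚ (SingularHomology ℚ (2 * d)
        (UnordConfigSpace ↥(Metric.sphere (0 : EuclideanSpace ℝ (Fin (2 * d + 1))) 1) (k + 1))) <
      Module.rank ℚ (SingularHomology ℚ (2 * d)
        (UnordConfigSpace ↥(Metric.sphere (0 : EuclideanSpace ℝ (Fin (2 * d + 1))) 1) k)) :=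
  homology_of_configuration_spaces_of_even_sphere_not_monotone_general ℚ two_ne_zero d hd
    finrank_euclideanSpace_fin
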